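/- arXiv:math/0603584 — 7 statements merged into one kernel-verified Lean document; each statement's English description precedes it below -/
import Mathlib

section
/- Let X be a complete ultrametric space such that: (i) every closed ball of positive diameter is the union of finitely many maximal proper closed subballs, and (ii) for every sequence B₁ ⊋ B₂ ⊋ B₃ ⊋ … of closed balls with strict inclusions, the diameters of the Bₖ tend to zero. Then every closed ball of X is compact; in particular, X is locally compact. -/
/-- A closed ball in a metric space: a set of the form `B̄(a,r)` with `r ≥ 0`. -/
def IsClosedBall {X : Type*} [MetricSpace X] (B : Set X) : Prop :=
  ∃ (a : X) (r : ℝ), 0 ≤ r ∧ B = Metric.closedBall a r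

/-- `B'` is a maximal proper closed subball of `B`: a closed ball strictly contained
in `B` such that no closed ball is strictly between `B'` and `B`. -/
def IsMaxSubball {X : Type*} [MetricSpace X] (B' B : Set X) : Prop :=
  IsClosedBall B' ∧ B' ⊂ B ∧ ∀ B'' : Set X, IsClosedBall B'' → B' ⊂ B'' → ¬(B'' ⊂ B)

/-- In a complete ultrametric space in which every closed ball of positive diameter is
a finite union of maximal proper closed subballs, and in which diameters along any
strictly decreasing sequence of closed balls tend to zero, every closed ball is
compact; in particular the space is locally compact. -/
theorem ultrametric_closedBall_compact {X : Type*} [MetricSpace X] [IsUltrametricDist X]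
    [CompleteSpace X]
    (h1 : ∀ B : Set X, IsClosedBall B → 0 < EMetric.diam B →
      ∃ M : Set (Set X), M.Finite ∧ (∀ m ∈ M, IsMaxSubball m B) ∧ B = ⋃₀ M)
    (h2 : ∀ B : ℕ → Set X, (∀ n, IsClosedBall (B n)) → (∀ n, B (n + 1) ⊂ B n) →
      Filter.Tendsto (fun n => EMetric.diam (B n)) Filter.atTop (nhds 0)) :
    (∀ B : Set X, IsClosedBall B → IsCompact B) ∧ LocallyCompactSpace X := by
  have hcov : ∀ ε : ENNReal, 0 < ε → ∀ B : Set X, IsClosedBall B →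
      ∃ t : Set X, t.Finite ∧ B ⊆ ⋃ y ∈ t, Metric.eball y ε := by
    intro ε hε
    by_contra! hbad
    obtain ⟨B₀, hB₀, hbad₀⟩ := hbad
    let Bad : Set X → Prop := fun B => IsClosedBall B ∧
      ¬ ∃ t : Set X, t.Finite ∧ B ⊆ ⋃ y ∈ t, Metric.eball y ε
    have hdiam : ∀ B, Bad B → ε ≤ Metric.ediam B := by
      rintro B ⟨⟨a, r, hr, rfl⟩, hB⟩
      by_contra! hlt
      refine hB ⟨{a}, Set.finite_singleton a, fun x hx => ?_⟩
      simp only [Set.mem_singleton_iff, Set.iUnion_iUnion_eq_left, Metric.mem_eball]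
      exact lt_of_le_of_lt (Metric.edist_le_ediam_of_mem hx (Metric.mem_closedBall_self hr)) hlt
    have hstep : ∀ B : {B // Bad B}, ∃ C : {B // Bad B}, C.1 ⊂ B.1 := by
      rintro ⟨B, hB⟩
      obtain ⟨M, hM, hmax, hU⟩ := h1 B hB.1 (lt_of_lt_of_le hε (hdiam B hB))
      by_contra! hno
      have hgood : ∀ m ∈ M, ∃ t : Set X, t.Finite ∧ m ⊆ ⋃ y ∈ t, Metric.eball y ε := by
        intro m hm
        by_contra hc
        exact hno ⟨m, (hmax m hm).1, hc⟩ (hmax m hm).2.1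
      choose! t ht htc using hgood
      refine hB.2 ⟨⋃ m ∈ M, t m, hM.biUnion ht, fun x hx => ?_⟩
      rw [hU] at hx
      obtain ⟨m, hm, hxm⟩ := hx
      obtain ⟨y, hy, hxy⟩ := Set.mem_iUnion₂.1 (htc m hm hxm)
      exact Set.mem_iUnion₂.2 ⟨y, Set.mem_iUnion₂.2 ⟨m, hm, hy⟩, hxy⟩
    choose f hf using hstep
    let b₀ : {B // Bad B} := ⟨B₀, hB₀, fun ⟨t, ht, hc⟩ => hbad₀ t ht hc⟩
    let S : ℕ → {B // Bad B} := fun n => f^[n] b₀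
    have hlim := h2 (fun n => (S n).1) (fun n => (S n).2.1) (fun n => by
      simp only [S, Function.iterate_succ_apply']
      exact hf _)
    obtain ⟨n, hn⟩ := (hlim.eventually (gt_mem_nhds hε)).exists
    exact absurd hn (not_lt.2 (hdiam _ (S n).2))
  have hcomp : ∀ B : Set X, IsClosedBall B → IsCompact B := by
    intro B hB
    refine isCompact_iff_totallyBounded_isComplete.2 ⟨?_, ?_⟩
    · exact EMetric.totallyBounded_iff.2 fun ε hε => hcov ε hε B hB
    · obtain ⟨a, r, -, rfl⟩ := hB
      exact Metric.isClosed_closedBall.isComplete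
  refine ⟨hcomp, ?_⟩
  have : WeaklyLocallyCompactSpace X := ⟨fun x => ⟨Metric.closedBall x 1,
    hcomp _ ⟨x, 1, zero_le_one, rfl⟩, Metric.closedBall_mem_nhds x one_pos⟩⟩
  infer_instance
end

section
/- Let X be an ultrametric space in which every closed ball of positive diameter is the union of its (finitely many) maximal proper closed subballs, and let ν be a Borel measure on X which is finite on closed balls. Let I and I' be closed balls of positive diameter with I ≠ I' (as sets). Let f : X → ℂ vanish outside I, be constant on each maximal proper closed subball of I, and satisfy ∫ f dν = 0; let f' : X → ℂ vanish outside I', be constant on each maximal proper closed subball of I', and satisfy ∫ f' dν = 0. Then ∫ conj(f(x)) · f'(x) dν(x) = 0, i.e. f and f' are orthogonal in L²(X,ν). -/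
open MeasureTheory

theorem wavelet_const_aux {X : Type*} [MetricSpace X] [IsUltrametricDist X]
    (hstruct : ∀ B : Set X, IsClosedBall B → 0 < EMetric.diam B →
      {B' : Set X | IsMaxSubball B' B}.Finite ∧ B = ⋃₀ {B' : Set X | IsMaxSubball B' B})
    {I I' : Set X} (hI : IsClosedBall I)
    (hI' : IsClosedBall I') (hdI' : 0 < EMetric.diam I') (hss : I ⊂ I')
    (f' : X → ℂ)
    (hf'c : ∀ B' : Set X, IsMaxSubball B' I' → ∀ x ∈ B', ∀ y ∈ B', f' x = f' y) :
    ∃ c, ∀ x ∈ I, f' x = c := by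
  obtain ⟨a, r, hr, rfl⟩ := id hI
  have ha : a ∈ Metric.closedBall a r := Metric.mem_closedBall_self hr
  have ha' := hss.1 ha
  rw [(hstruct I' hI' hdI').2] at ha'
  obtain ⟨B, hB, haB⟩ := ha'
  have hB' : IsMaxSubball B I' := hB
  obtain ⟨b, s, hs, rfl⟩ := id hB'.1
  refine ⟨f' a, fun x hx => hf'c _ hB' x ?_ a haB⟩
  rcases IsUltrametricDist.closedBall_subset_trichotomy (x := a) (y := b) (r := r) (s := s)
    with h | h | h
  · exact h hx
  · by_contra hxB
    exact hB'.2.2 _ hI ⟨h, fun h2 => hxB (h2 hx)⟩ hss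
  · exact absurd haB (Set.disjoint_left.1 h ha)

/-- Two wavelet functions associated to distinct balls are orthogonal in `L²(X,ν)`:
if `f` is supported in the ball `I`, constant on each maximal proper closed subball
of `I`, and has zero mean, and `f'` is likewise associated to a ball `I' ≠ I`, then
`∫ conj(f) · f' dν = 0`. -/
theorem ultrametric_wavelets_orthogonal {X : Type*} [MetricSpace X] [IsUltrametricDist X]
    [MeasurableSpace X] [BorelSpace X] (ν : Measure X)
    (hstruct : ∀ B : Set X, IsClosedBall B → 0 < EMetric.diam B →
      {B' : Set X | IsMaxSubball B' B}.Finite ∧ B = ⋃₀ {B' : Set X | IsMaxSubball B' B})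
    (hν : ∀ B : Set X, IsClosedBall B → ν B < ⊤)
    {I I' : Set X} (hI : IsClosedBall I) (hdI : 0 < EMetric.diam I)
    (hI' : IsClosedBall I') (hdI' : 0 < EMetric.diam I') (hne : I ≠ I')
    (f f' : X → ℂ)
    (hf0 : ∀ x ∉ I, f x = 0)
    (hfc : ∀ B' : Set X, IsMaxSubball B' I → ∀ x ∈ B', ∀ y ∈ B', f x = f y)
    (hfm : ∫ x, f x ∂ν = 0)
    (hf'0 : ∀ x ∉ I', f' x = 0)
    (hf'c : ∀ B' : Set X, IsMaxSubball B' I' → ∀ x ∈ B', ∀ y ∈ B', f' x = f' y)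
    (hf'm : ∫ x, f' x ∂ν = 0) :
    ∫ x, (starRingEnd ℂ) (f x) * f' x ∂ν = 0 := by
  have key : I ⊂ I' ∨ I' ⊂ I ∨ Disjoint I I' := by
    obtain ⟨a, r, hr, rfl⟩ := id hI
    obtain ⟨b, s, hs, rfl⟩ := id hI'
    rcases IsUltrametricDist.closedBall_subset_trichotomy (x := a) (y := b) (r := r) (s := s)
      with h | h | h
    · exact Or.inl (h.ssubset_of_ne hne)
    · exact Or.inr (Or.inl (h.ssubset_of_ne hne.symm))
    · exact Or.inr (Or.inr h)
  rcases key with h | h | h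
  · obtain ⟨c, hc⟩ := wavelet_const_aux hstruct hI hI' hdI' h f' hf'c
    have : ∀ x, (starRingEnd ℂ) (f x) * f' x = (starRingEnd ℂ) (f x) * c := by
      intro x
      by_cases hx : x ∈ I
      · rw [hc x hx]
      · simp [hf0 x hx]
    simp_rw [this]
    rw [integral_mul_const, integral_conj, hfm]
    simp
  · obtain ⟨c, hc⟩ := wavelet_const_aux hstruct hI' hI hdI h f hfc
    have : ∀ x, (starRingEnd ℂ) (f x) * f' x = (starRingEnd ℂ) c * f' x := by
      intro x
      by_cases hx : x ∈ I'
      · rw [hc x hx]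
      · simp [hf'0 x hx]
    simp_rw [this]
    rw [integral_const_mul, hf'm, mul_zero]
  · have : ∀ x, (starRingEnd ℂ) (f x) * f' x = 0 := by
      intro x
      by_cases hx : x ∈ I
      · rw [hf'0 x (Set.disjoint_left.1 h hx), mul_zero]
      · simp [hf0 x hx]
    simp [this]
end

section
/- Let X be a complete separable ultrametric space such that every closed ball of positive diameter is the union of finitely many maximal proper closed subballs and every strictly decreasing sequence of closed balls has diameters tending to zero. Let ν be a Borel measure on X which assigns finite positive measure to every closed ball of positive diameter and to every maximal proper closed subball of such a ball, and suppose there is an increasing sequence of closed balls whose union is X and whose ν-measures tend to infinity. For each closed ball I of positive diameter, with pairwise disjoint maximal proper closed subballs I₁, …, I_{p_I} (p_I ≥ 2), let (ψ_{I,j})_{j=1}^{p_I−1} be an orthonormal basis of the (p_I−1)-dimensional subspace of L²(X,ν) consisting of linear combinations of the indicator functions of I₁, …, I_{p_I} with zero ν-integral. Then the total family {ψ_{I,j}}, indexed by all closed balls I of positive diameter and 1 ≤ j ≤ p_I − 1, is an orthonormal (Hilbert) basis of L²(X,ν). -/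
open MeasureTheory

theorem IsClosedBall.nonempty' {X : Type*} [MetricSpace X] {B : Set X} (h : IsClosedBall B) :
    B.Nonempty := by
  obtain ⟨a, r, hr, rfl⟩ := h
  exact ⟨a, Metric.mem_closedBall_self hr⟩

theorem IsClosedBall.meas {X : Type*} [MetricSpace X] [MeasurableSpace X] [BorelSpace X]
    {B : Set X} (h : IsClosedBall B) : MeasurableSet B := by
  obtain ⟨a, r, hr, rfl⟩ := h
  exact measurableSet_closedBall

theorem IsClosedBall.nested {X : Type*} [MetricSpace X] [IsUltrametricDist X]
    {A B : Set X} (hA : IsClosedBall A) (hB : IsClosedBall B) {x : X} (hxA : x ∈ A)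
    (hxB : x ∈ B) : A ⊆ B ∨ B ⊆ A := by
  obtain ⟨a, r, hr, rfl⟩ := hA
  obtain ⟨b, s, hs, rfl⟩ := hB
  rw [IsUltrametricDist.closedBall_eq_of_mem hxA, IsUltrametricDist.closedBall_eq_of_mem hxB]
  rcases le_total r s with h | h
  · exact Or.inl (Metric.closedBall_subset_closedBall h)
  · exact Or.inr (Metric.closedBall_subset_closedBall h)

theorem IsMaxSubball.subset_of {X : Type*} [MetricSpace X] [IsUltrametricDist X]
    {A C B : Set X} (hC : IsMaxSubball C B) (hA : IsClosedBall A) (hAB : A ⊂ B) {x : X}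
    (hxA : x ∈ A) (hxC : x ∈ C) : A ⊆ C := by
  rcases hA.nested hC.1 hxA hxC with h | h
  · exact h
  · by_contra hn
    exact hC.2.2 A hA ⟨h, hn⟩ hAB

theorem IsMaxSubball.eq_of {X : Type*} [MetricSpace X] [IsUltrametricDist X]
    {A C B : Set X} (hA : IsMaxSubball A B) (hC : IsMaxSubball C B) {x : X}
    (hxA : x ∈ A) (hxC : x ∈ C) : A = C :=
  Set.Subset.antisymm (hC.subset_of hA.1 hA.2.1 hxA hxC) (hA.subset_of hC.1 hC.2.1 hxC hxA)

theorem local_average {X : Type*} [MeasurableSpace X] (ν : Measure X)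
    {ι : Type*} [Fintype ι] (s : ι → Set X) (hs : ∀ i, MeasurableSet (s i))
    (hsf : ∀ i, ν (s i) ≠ ⊤) (hdisj : Pairwise (fun i j => Disjoint (s i) (s j)))
    (B : Set X) (hB : B = ⋃ i, s i) (hBm : MeasurableSet B) (hB0 : ν B ≠ 0) (hBf : ν B ≠ ⊤)
    (n : ℕ) (hn : n + 1 = Fintype.card ι) (ψ : Fin n → Lp ℂ 2 ν) (hψ : Orthonormal ℂ ψ)
    (hform : ∀ j, ∃ g : X → ℂ, (∀ x ∉ B, g x = 0) ∧
      (∀ i, ∀ x ∈ s i, ∀ y ∈ s i, g x = g y) ∧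
      (∫ x, g x ∂ν = 0) ∧ (ψ j : X → ℂ) =ᵐ[ν] g)
    (f : Lp ℂ 2 ν) (hf : ∀ j, inner ℂ (ψ j) f = 0) (i : ι) :
    (ν.real B : ℂ) * ∫ x in s i, f x ∂ν = (ν.real (s i) : ℂ) * ∫ x in B, f x ∂ν := by
  classical
  set e : ι → Lp ℂ 2 ν := fun i => indicatorConstLp 2 (hs i) (hsf i) (1 : ℂ) with he
  set u : Lp ℂ 2 ν := indicatorConstLp 2 hBm hBf (1 : ℂ) with hu
  set V := Submodule.span ℂ (Set.range e) with hV
  -- any function constant on pieces lies in V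
  have key : ∀ (h : Lp ℂ 2 ν) (g : X → ℂ), (∀ x ∉ B, g x = 0) →
      (∀ i, ∀ x ∈ s i, ∀ y ∈ s i, g x = g y) → (h : X → ℂ) =ᵐ[ν] g → h ∈ V := by
    intro h g g0 gc hg
    have : ∃ c : ι → ℂ, ∀ i, ∀ x ∈ s i, g x = c i := by
      have : ∀ i, ∃ c : ℂ, ∀ x ∈ s i, g x = c := by
        intro i
        rcases (s i).eq_empty_or_nonempty with h | ⟨y, hy⟩
        · exact ⟨0, by simp [h]⟩
        · exact ⟨g y, fun x hx => gc i x hx y hy⟩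
      choose c hc using this
      exact ⟨c, hc⟩
    obtain ⟨c, hc⟩ := this
    have hsum : h = ∑ i, c i • e i := by
      apply Lp.ext
      have h1 : ∀ i, ((c i • e i : Lp ℂ 2 ν) : X → ℂ) =ᵐ[ν]
          fun x => (s i).indicator (fun _ => c i) x := by
        intro i
        filter_upwards [Lp.coeFn_smul (c i) (e i),
          indicatorConstLp_coeFn (p := 2) (hs := hs i) (hμs := hsf i) (c := (1 : ℂ))] with x h1 h2
        rw [h1, Pi.smul_apply]
        simp only [he]
        rw [h2]
        by_cases hx : x ∈ s i <;> simp [hx]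
      have h2 := Lp.coeFn_finsetSum Finset.univ (fun i => c i • e i)
      filter_upwards [hg, h2, ae_all_iff.2 h1] with x hx hx2 hx1
      rw [hx, hx2, Finset.sum_apply, Finset.sum_congr rfl (fun i _ => hx1 i)]
      by_cases hxB : x ∈ B
      · rw [hB] at hxB
        obtain ⟨k, hk⟩ := Set.mem_iUnion.1 hxB
        rw [Finset.sum_eq_single k]
        · simp [hk, hc k x hk]
        · intro b _ hb
          rw [Set.indicator_of_notMem]
          exact fun hxb => Set.disjoint_left.1 (hdisj hb) hxb hk
        · simp
      · rw [g0 x hxB, Finset.sum_eq_zero]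
        intro k _
        rw [Set.indicator_of_notMem]
        intro hk
        exact hxB (hB ▸ Set.mem_iUnion.2 ⟨k, hk⟩)
    rw [hsum]
    exact Submodule.sum_mem _ fun i _ => Submodule.smul_mem _ _ (Submodule.subset_span ⟨i, rfl⟩)
  have huV : u ∈ V := by
    refine key u (B.indicator fun _ => 1) (fun x hx => by simp [hx]) ?_ indicatorConstLp_coeFn
    intro i x hx y hy
    have h1 : x ∈ B := hB ▸ Set.mem_iUnion.2 ⟨i, hx⟩
    have h2 : y ∈ B := hB ▸ Set.mem_iUnion.2 ⟨i, hy⟩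
    simp [h1, h2]
  have hψV : ∀ j, ψ j ∈ V := by
    intro j
    obtain ⟨g, g0, gc, -, hg⟩ := hform j
    exact key _ g g0 gc hg
  have huψ : ∀ j, inner ℂ (ψ j) u = 0 := by
    intro j
    rw [← inner_conj_symm, hu, L2.inner_indicatorConstLp_one]
    obtain ⟨g, g0, gc, gi, hg⟩ := hform j
    rw [setIntegral_congr_ae (g := g) hBm (hg.mono fun x hx _ => hx),
      setIntegral_eq_integral_of_forall_compl_eq_zero (fun x hx => g0 x hx), gi]
    simp
  have huu : inner ℂ u u = (ν.real B : ℂ) := by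
    rw [hu, L2.inner_indicatorConstLp_one_indicatorConstLp_one, Set.inter_self]; rfl
  have hBr : (ν.real B : ℂ) ≠ 0 := by
    simp [measureReal_def, ENNReal.toReal_eq_zero_iff, hB0, hBf]
  have hperp : ∀ w ∈ Submodule.span ℂ (Set.range ψ), ∀ f : Lp ℂ 2 ν,
      (∀ j, inner ℂ (ψ j) f = 0) → inner ℂ w f = 0 := by
    intro w hw f hf
    have : f ∈ (Submodule.span ℂ (Set.range ψ))ᗮ := by
      rw [Submodule.mem_orthogonal]
      intro w hw
      induction hw using Submodule.span_induction with
      | mem x hx => obtain ⟨j, rfl⟩ := hx; exact hf j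
      | zero => simp
      | add x y _ _ hx hy => rw [inner_add_left, hx, hy, add_zero]
      | smul a x _ hx => rw [inner_smul_left, hx, mul_zero]
    exact (Submodule.mem_orthogonal _ _).1 this w hw
  have hli : LinearIndependent ℂ (fun o : Option (Fin n) => (o.elim u ψ : Lp ℂ 2 ν)) := by
    rw [linearIndependent_option]
    refine ⟨hψ.linearIndependent, fun hmem => ?_⟩
    exact hBr (huu ▸ hperp u hmem u huψ)
  have hle : Submodule.span ℂ (Set.range (fun o : Option (Fin n) => (o.elim u ψ : Lp ℂ 2 ν))) ≤ V := by
    rw [Submodule.span_le]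
    rintro _ ⟨o, rfl⟩
    cases o with
    | none => exact huV
    | some j => exact hψV j
  have : FiniteDimensional ℂ V := FiniteDimensional.span_of_finite ℂ (Set.finite_range e)
  have heq := Submodule.eq_of_le_of_finrank_le hle (by
    rw [finrank_span_eq_card hli, Fintype.card_option, Fintype.card_fin, hn]
    exact finrank_range_le_card e)
  have hei : e i ∈ Submodule.span ℂ (Set.range (fun o : Option (Fin n) => (o.elim u ψ : Lp ℂ 2 ν))) := by
    rw [heq]; exact Submodule.subset_span ⟨i, rfl⟩
  have hr : Set.range (fun o : Option (Fin n) => (o.elim u ψ : Lp ℂ 2 ν)) = insert u (Set.range ψ) := by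
    ext x; simp [Option.exists, eq_comm]
  rw [hr, Submodule.mem_span_insert] at hei
  obtain ⟨a, z, hz, haz⟩ := hei
  have hI : ∀ h : Lp ℂ 2 ν, (∀ j, inner ℂ (ψ j) h = 0) →
      inner ℂ (e i) h = (starRingEnd ℂ) a * inner ℂ u h := by
    intro h hh
    rw [haz, inner_add_left, inner_smul_left, hperp z hz h hh, add_zero]
  have h1 := hI u huψ
  have h2 := hI f hf
  rw [huu] at h1
  have h3 : inner ℂ (e i) u = (ν.real (s i) : ℂ) := by
    simp only [he, hu]
    rw [L2.inner_indicatorConstLp_one_indicatorConstLp_one (hs i) hBm (hsf i) hBf,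
      Set.inter_eq_left.2]
    · rfl
    · rw [hB]; exact Set.subset_iUnion s i
  rw [h3] at h1
  simp only [he, hu] at h2
  rw [L2.inner_indicatorConstLp_one, L2.inner_indicatorConstLp_one] at h2
  rw [h1, h2]; ring

theorem setIntegral_bound {X : Type*} [MeasurableSpace X] (ν : Measure X) (f : Lp ℂ 2 ν)
    (B : Set X) (hBm : MeasurableSet B) (hBf : ν B ≠ ⊤) :
    ‖∫ x in B, f x ∂ν‖ ≤ Real.sqrt (ν.real B) * ‖f‖ := by
  rw [← L2.inner_indicatorConstLp_one (𝕜 := ℂ) hBm hBf f]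
  refine (norm_inner_le_norm _ _).trans ?_
  gcongr
  rw [norm_indicatorConstLp (by simp) (by simp), Real.sqrt_eq_rpow]
  simp

/-- A function in `L²` integrating to zero over all small balls vanishes. -/
theorem ae_zero_of_balls {X : Type*} [MetricSpace X]
    [IsUltrametricDist X] [TopologicalSpace.SeparableSpace X]
    [MeasurableSpace X] [BorelSpace X] (ν : Measure X) (f : X → ℂ)
    (D : Set X) (hD : IsClosedBall D) (hfD : IntegrableOn f D ν)
    (hD0 : ∫ x in D, f x ∂ν = 0)
    (h0 : ∀ a r, 0 < r → Metric.closedBall a r ⊆ D →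
      ∫ x in Metric.closedBall a r, f x ∂ν = 0) :
    f =ᵐ[ν.restrict D] 0 := by
  have : SecondCountableTopology X := UniformSpace.secondCountable_of_separable X
  refine Integrable.ae_eq_zero_of_forall_setIntegral_eq_zero hfD ?_
  rintro s hs -
  have hbasis : TopologicalSpace.IsTopologicalBasis
      {B : Set X | ∃ a r, 0 < r ∧ B = Metric.closedBall a r} := by
    apply TopologicalSpace.isTopologicalBasis_of_isOpen_of_nhds
    · rintro _ ⟨a, r, hr, rfl⟩
      exact IsUltrametricDist.isOpen_closedBall a hr.ne'
    · intro a U ha hU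
      obtain ⟨r, hr, h⟩ := Metric.nhds_basis_closedBall.mem_iff.1 (hU.mem_nhds ha)
      exact ⟨_, ⟨a, r, hr, rfl⟩, Metric.mem_closedBall_self hr.le, h⟩
  have hgen := hbasis.borel_eq_generateFrom
  rw [← BorelSpace.measurable_eq (α := X)] at hgen
  have hpi : IsPiSystem {B : Set X | ∃ a r, 0 < r ∧ B = Metric.closedBall a r} := by
    rintro _ ⟨a, r, hr, rfl⟩ _ ⟨b, t, ht, rfl⟩ ⟨x, hxA, hxB⟩
    rcases IsClosedBall.nested ⟨a, r, hr.le, rfl⟩ ⟨b, t, ht.le, rfl⟩ hxA hxB with h | h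
    · rw [Set.inter_eq_left.2 h]; exact ⟨a, r, hr, rfl⟩
    · rw [Set.inter_eq_right.2 h]; exact ⟨b, t, ht, rfl⟩
  induction s, hs using MeasurableSpace.induction_on_inter hgen hpi with
  | empty => simp
  | basic t ht =>
    obtain ⟨a, r, hr, rfl⟩ := ht
    rw [Measure.restrict_restrict measurableSet_closedBall]
    rcases (Metric.closedBall a r ∩ D).eq_empty_or_nonempty with h | ⟨x, hxA, hxB⟩
    · simp [h]
    · rcases IsClosedBall.nested ⟨a, r, hr.le, rfl⟩ hD hxA hxB with h | h
      · rw [Set.inter_eq_left.2 h]; exact h0 a r hr h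
      · rw [Set.inter_eq_right.2 h]; exact hD0
  | compl t htm ih =>
    have := integral_add_compl htm hfD
    rw [ih, hD0] at this
    simpa using this
  | iUnion g hg hgm ih =>
    rw [integral_iUnion hgm hg hfD.integrableOn]
    simp [ih]

/-- The basis of ultrametric wavelets, case of infinite measure: if the regular
ultrametric space `X` is exhausted by an increasing sequence of closed balls whose
measures tend to infinity, then the family `{ψ_{I,j}}`, where `I` runs over closed
balls of positive diameter and, for each such `I`, `(ψ_{I,j})_{j=1}^{p_I-1}` is an
orthonormal basis of the space of zero-mean linear combinations of indicators of the
maximal proper closed subballs of `I`, is an orthonormal Hilbert basis of `L²(X,ν)`. -/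
theorem ultrametric_wavelets_orthonormal_basis {X : Type*} [MetricSpace X]
    [IsUltrametricDist X] [CompleteSpace X] [TopologicalSpace.SeparableSpace X]
    [MeasurableSpace X] [BorelSpace X] (ν : Measure X)
    (hstruct : ∀ B : Set X, IsClosedBall B → 0 < EMetric.diam B →
      {B' : Set X | IsMaxSubball B' B}.Finite ∧ B = ⋃₀ {B' : Set X | IsMaxSubball B' B})
    (hdiam : ∀ B : ℕ → Set X, (∀ n, IsClosedBall (B n)) → (∀ n, B (n + 1) ⊂ B n) →
      Filter.Tendsto (fun n => EMetric.diam (B n)) Filter.atTop (nhds 0))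
    (hνball : ∀ B : Set X, IsClosedBall B → 0 < EMetric.diam B → 0 < ν B ∧ ν B < ⊤)
    (hνsub : ∀ B B' : Set X, IsClosedBall B → 0 < EMetric.diam B → IsMaxSubball B' B →
      0 < ν B' ∧ ν B' < ⊤)
    (hexh : ∃ D : ℕ → Set X, (∀ n, IsClosedBall (D n)) ∧ Monotone D ∧
      (⋃ n, D n) = Set.univ ∧ Filter.Tendsto (fun n => ν (D n)) Filter.atTop (nhds ⊤))
    -- `p B` is the number of maximal proper closed subballs of `B`
    (p : Set X → ℕ)
    (hp : ∀ B : Set X, IsClosedBall B → 0 < EMetric.diam B →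
      2 ≤ p B ∧ Nat.card {B' : Set X | IsMaxSubball B' B} = p B)
    -- the wavelet family, indexed by balls `I` of positive diameter and `1 ≤ j ≤ p_I - 1`
    (ψ : (Σ B : {B : Set X // IsClosedBall B ∧ 0 < EMetric.diam B}, Fin (p B.1 - 1)) →
      Lp ℂ 2 ν)
    -- each `ψ_{I,j}` is (a.e.) a linear combination of indicators of the maximal
    -- subballs of `I` with zero mean
    (hform : ∀ i, ∃ g : X → ℂ, (∀ x ∉ i.1.1, g x = 0) ∧
      (∀ B' : Set X, IsMaxSubball B' i.1.1 → ∀ x ∈ B', ∀ y ∈ B', g x = g y) ∧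
      (∫ x, g x ∂ν = 0) ∧ (ψ i : X → ℂ) =ᵐ[ν] g)
    -- for each ball `I`, the family `(ψ_{I,j})_j` is orthonormal (hence an orthonormal
    -- basis of the `(p_I - 1)`-dimensional zero-mean space)
    (hon : ∀ B : {B : Set X // IsClosedBall B ∧ 0 < EMetric.diam B},
      Orthonormal ℂ (fun j : Fin (p B.1 - 1) => ψ ⟨B, j⟩)) :
    Orthonormal ℂ ψ ∧ (Submodule.span ℂ (Set.range ψ)).topologicalClosure = ⊤ := by
  have diam_pos : ∀ B : Set X, 0 < EMetric.diam B ↔ B.Nontrivial := fun B => Metric.ediam_pos_iff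
  have hcov : ∀ B : Set X, IsClosedBall B → B.Nontrivial → ∀ x ∈ B,
      ∃ C, IsMaxSubball C B ∧ x ∈ C := by
    intro B hB hBn x hx
    rw [(hstruct B hB ((diam_pos B).2 hBn)).2] at hx
    exact hx
  constructor
  · -- orthonormality
    have horth : ∀ i i', i.1.1 ⊂ i'.1.1 → inner ℂ (ψ i) (ψ i') = 0 := by
      intro i i' hlt
      obtain ⟨g, g0, -, gi, hg⟩ := hform i
      obtain ⟨g', -, gc', -, hg'⟩ := hform i'
      obtain ⟨x, hx⟩ := i.1.2.1.nonempty'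
      obtain ⟨C, hC, hxC⟩ := hcov _ i'.1.2.1 ((diam_pos _).1 i'.1.2.2) x (hlt.1 hx)
      have hsub := hC.subset_of i.1.2.1 hlt hx hxC
      rw [L2.inner_def]
      have : ∫ a, inner ℂ (ψ i a) (ψ i' a) ∂ν = ∫ a, g' x * (starRingEnd ℂ) (g a) ∂ν := by
        apply integral_congr_ae
        filter_upwards [hg, hg'] with a ha ha'
        rw [ha, ha']
        simp only [RCLike.inner_apply]
        by_cases h : a ∈ i.1.1
        · rw [gc' C hC a (hsub h) x hxC]
        · simp [g0 a h]
      rw [this, integral_const_mul, integral_conj, gi]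
      simp
    refine ⟨fun i => (hon i.1).1 i.2, ?_⟩
    rintro ⟨B, j⟩ ⟨B', j'⟩ hne
    by_cases hBB : B = B'
    · subst hBB
      exact (hon B).2 (fun h => hne (by rw [h]))
    have hBB' : B.1 ≠ B'.1 := fun h => hBB (Subtype.ext h)
    rcases (B.1 ∩ B'.1).eq_empty_or_nonempty with h | ⟨x, hx, hx'⟩
    · obtain ⟨g, g0, -, -, hg⟩ := hform ⟨B, j⟩
      obtain ⟨g', g0', -, -, hg'⟩ := hform ⟨B', j'⟩
      rw [L2.inner_def]
      apply integral_eq_zero_of_ae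
      filter_upwards [hg, hg'] with a ha ha'
      rw [ha, ha']
      by_cases h1 : a ∈ B.1
      · have h2 : a ∉ B'.1 := fun h2 => by
          have : a ∈ B.1 ∩ B'.1 := ⟨h1, h2⟩
          simp [h] at this
        simp [g0' a h2]
      · simp [g0 a h1]
    · rcases B.2.1.nested B'.2.1 hx hx' with h | h
      · exact horth ⟨B, j⟩ ⟨B', j'⟩ (h.ssubset_of_ne hBB')
      · rw [← inner_conj_symm, horth ⟨B', j'⟩ ⟨B, j⟩ (h.ssubset_of_ne hBB'.symm)]
        simp
  · rw [Submodule.topologicalClosure_eq_top_iff, Submodule.eq_bot_iff]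
    intro f hf
    have hf0 : ∀ i, inner ℂ (ψ i) f = 0 := fun i =>
      (Submodule.mem_orthogonal _ _).1 hf _ (Submodule.subset_span ⟨i, rfl⟩)
    obtain ⟨D, hDb, hDm, hDu, hDt⟩ := hexh
    rcases subsingleton_or_nontrivial X with hX | hX
    · -- one-point space of infinite mass
      obtain ⟨x, -⟩ := (hDb 0).nonempty'
      have hD : ∀ n, D n = Set.univ := fun n =>
        Subsingleton.eq_univ_of_nonempty (hDb n).nonempty'
      have hν : ν Set.univ = ⊤ := by
        simp only [hD] at hDt
        exact tendsto_nhds_unique tendsto_const_nhds hDt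
      have hfx : (f : X → ℂ) = fun _ => f x := funext fun y => by rw [Subsingleton.elim y x]
      have hmem := Lp.memLp f
      rw [hfx, memLp_const_iff (by simp) (by simp)] at hmem
      have h0 : f x = 0 := by
        rcases hmem with h | h
        · exact h
        · simp [hν] at h
      rw [Lp.eq_zero_iff_ae_eq_zero, hfx, h0]
      rfl
    -- the averages agree
    have havg : ∀ B C : Set X, IsClosedBall B → B.Nontrivial → IsMaxSubball C B →
        (ν.real B : ℂ) * ∫ x in C, f x ∂ν = (ν.real C : ℂ) * ∫ x in B, f x ∂ν := by
      intro B C hB hBn hC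
      have hd := (diam_pos B).2 hBn
      obtain ⟨hfin, hU⟩ := hstruct B hB hd
      have : Fintype {B' : Set X | IsMaxSubball B' B} := hfin.fintype
      have hpB := hp B hB hd
      rw [Nat.card_eq_fintype_card] at hpB
      refine local_average ν (fun i : {B' : Set X | IsMaxSubball B' B} => i.1)
        (fun i => i.2.1.meas) (fun i => (hνsub B i.1 hB hd i.2).2.ne) ?_ B ?_ hB.meas
        (hνball B hB hd).1.ne' (hνball B hB hd).2.ne (p B - 1) (by omega)
        (fun j => ψ ⟨⟨B, hB, hd⟩, j⟩) (hon ⟨B, hB, hd⟩) ?_ f (fun j => hf0 _) ⟨C, hC⟩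
      · intro i i' hne
        rw [Set.disjoint_left]
        intro x hx hx'
        exact hne (Subtype.ext (i.2.eq_of i'.2 hx hx'))
      · rw [← Set.sUnion_eq_iUnion]; exact hU
      · intro j
        obtain ⟨g, h1, h2, h3, h4⟩ := hform ⟨⟨B, hB, hd⟩, j⟩
        exact ⟨g, h1, fun i => h2 i.1 i.2, h3, h4⟩
    -- averages along chains
    have hchain : ∀ E : Set X, IsClosedBall E → E.Nontrivial → ∀ a r, 0 < r →
        Metric.closedBall a r ⊆ E → 0 < ν.real (Metric.closedBall a r) ∧
        (ν.real E : ℂ) * ∫ x in Metric.closedBall a r, f x ∂ν =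
          (ν.real (Metric.closedBall a r) : ℂ) * ∫ x in E, f x ∂ν := by
      intro E hE hEn a r hr hsub
      set B := Metric.closedBall a r with hBdef
      have haB : a ∈ B := Metric.mem_closedBall_self hr.le
      have hBb : IsClosedBall B := ⟨a, r, hr.le, rfl⟩
      set good : Set X → Prop := fun C => 0 < ν.real C ∧
        (ν.real E : ℂ) * ∫ x in C, f x ∂ν = (ν.real C : ℂ) * ∫ x in E, f x ∂ν with hgood
      change good B
      by_contra hbad
      have hpos : ∀ C, 0 < ν C ∧ ν C < ⊤ → 0 < ν.real C := fun C h =>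
        ENNReal.toReal_pos h.1.ne' h.2.ne
      have hEgood : good E := ⟨hpos E (hνball E hE ((diam_pos E).2 hEn)), rfl⟩
      let S := {C : Set X // IsClosedBall C ∧ B ⊂ C ∧ good C}
      have hstep : ∀ C : S, ∃ C' : S, C'.1 ⊂ C.1 := by
        rintro ⟨C, hC, hBC, hCg⟩
        have hCn : C.Nontrivial := by
          obtain ⟨y, hy, hyB⟩ := Set.exists_of_ssubset hBC
          exact ⟨a, hBC.1 haB, y, hy, fun h => hyB (h ▸ haB)⟩
        obtain ⟨C', hC', haC'⟩ := hcov C hC hCn a (hBC.1 haB)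
        have hBC' : B ⊆ C' := hC'.subset_of hBb hBC haB haC'
        have hC'g : good C' := by
          refine ⟨hpos C' (hνsub C C' hC ((diam_pos C).2 hCn) hC'), ?_⟩
          have h1 := havg C C' hC hCn hC'
          have h2 := hCg.2
          have h3 : (ν.real C : ℂ) ≠ 0 := by exact_mod_cast hCg.1.ne'
          apply mul_left_cancel₀ h3
          linear_combination (ν.real E : ℂ) * h1 + (ν.real C' : ℂ) * h2
        exact ⟨⟨C', hC'.1, hBC'.ssubset_of_ne (fun h => hbad (h ▸ hC'g)), hC'g⟩, hC'.2.1⟩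
      choose nxt hnxt using hstep
      let c0 : S := ⟨E, hE, hsub.ssubset_of_ne (fun h => hbad (h ▸ hEgood)), hEgood⟩
      let c : ℕ → S := fun n => Nat.rec c0 (fun _ C => nxt C) n
      have ht := hdiam (fun n => (c n).1) (fun n => (c n).2.1) (fun n => hnxt (c n))
      have hev := ht.eventually (gt_mem_nhds (ENNReal.ofReal_pos.2 hr))
      obtain ⟨n, hn⟩ := hev.exists
      have hBc := (c n).2.2.1
      refine hBc.2 (fun y hy => ?_)
      have h1 : edist y a ≤ EMetric.diam (c n).1 := Metric.edist_le_ediam_of_mem hy (hBc.1 haB)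
      rw [hBdef, Metric.mem_closedBall]
      have h2 := h1.trans hn.le
      rwa [edist_dist, ENNReal.ofReal_le_ofReal_iff hr.le] at h2
    obtain ⟨x, y, hxy⟩ := exists_pair_ne X
    obtain ⟨N, hN⟩ : ∃ N, x ∈ D N ∧ y ∈ D N := by
      have hx : x ∈ ⋃ n, D n := hDu ▸ Set.mem_univ x
      have hy : y ∈ ⋃ n, D n := hDu ▸ Set.mem_univ y
      obtain ⟨n, hn⟩ := Set.mem_iUnion.1 hx
      obtain ⟨m, hm⟩ := Set.mem_iUnion.1 hy
      exact ⟨max n m, hDm (le_max_left n m) hn, hDm (le_max_right n m) hm⟩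
    have hDn : ∀ n, N ≤ n → (D n).Nontrivial := fun n hn =>
      ⟨x, hDm hn hN.1, y, hDm hn hN.2, hxy⟩
    have hDf : ∀ n, N ≤ n → 0 < ν (D n) ∧ ν (D n) < ⊤ := fun n hn =>
      hνball _ (hDb n) ((diam_pos _).2 (hDn n hn))
    have hlim : Filter.Tendsto (fun n => ν.real (D n)) Filter.atTop Filter.atTop := by
      rw [Filter.tendsto_atTop]
      intro b
      have := hDt.eventually (lt_mem_nhds (ENNReal.ofReal_lt_top (r := b)))
      filter_upwards [this, Filter.eventually_ge_atTop N] with n h1 h2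
      exact (ENNReal.ofReal_le_iff_le_toReal (hDf n h2).2.ne).1 h1.le
    have hzero : ∀ m, N ≤ m → ∀ a r, 0 < r → Metric.closedBall a r ⊆ D m →
        ∫ x in Metric.closedBall a r, f x ∂ν = 0 := by
      intro m hm a r hr hsub
      set B := Metric.closedBall a r with hBdef
      have hbd : ∀ᶠ n in Filter.atTop, ‖∫ x in B, f x ∂ν‖ ≤
          (ν.real B * ‖f‖) / Real.sqrt (ν.real (D n)) := by
        filter_upwards [Filter.eventually_ge_atTop m] with n hn
        obtain ⟨h1, h2⟩ := hchain (D n) (hDb n) (hDn n (hm.trans hn)) a r hr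
          (hsub.trans (hDm hn))
        have hfin := hDf n (hm.trans hn)
        have hpos : 0 < ν.real (D n) := ENNReal.toReal_pos hfin.1.ne' hfin.2.ne
        have h3 := setIntegral_bound ν f (D n) (hDb n).meas hfin.2.ne
        have h4 := congrArg norm h2
        rw [norm_mul, norm_mul, Complex.norm_real, Complex.norm_real, Real.norm_of_nonneg hpos.le,
          Real.norm_of_nonneg h1.le] at h4
        have hs : 0 < Real.sqrt (ν.real (D n)) := Real.sqrt_pos.2 hpos
        rw [le_div_iff₀ hs]
        have h5 : ν.real (D n) * ‖∫ x in B, f x ∂ν‖ ≤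
            ν.real B * (Real.sqrt (ν.real (D n)) * ‖f‖) := by
          rw [h4]; gcongr
        have h6 := Real.mul_self_sqrt hpos.le
        rw [← h6] at h5
        simp only [Real.sqrt_mul_self hs.le] at h5
        apply le_of_mul_le_mul_left _ hs
        calc _ = _ := by ring
          _ ≤ _ := h5
          _ = _ := by ring
      have hl : Filter.Tendsto (fun n => (ν.real B * ‖f‖) / Real.sqrt (ν.real (D n)))
          Filter.atTop (nhds 0) :=
        Filter.Tendsto.const_div_atTop (Real.tendsto_sqrt_atTop.comp hlim) _
      exact norm_le_zero_iff.1 (ge_of_tendsto hl hbd)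
    rw [Lp.eq_zero_iff_ae_eq_zero]
    have hres : ∀ n, (f : X → ℂ) =ᵐ[ν.restrict (D (N + n))] 0 := by
      intro n
      have hn : N ≤ N + n := Nat.le_add_right N n
      have hfin := hDf _ hn
      refine ae_zero_of_balls ν f (D (N + n)) (hDb _) ?_ ?_ (hzero _ hn)
      · have : IsFiniteMeasure (ν.restrict (D (N + n))) := ⟨by simpa using hfin.2⟩
        exact ((Lp.memLp f).restrict _).integrable (by norm_num)
      · obtain ⟨a, r, hr, hD⟩ := hDb (N + n)
        have hr' : 0 < r := by
          rcases hr.lt_or_eq with h | h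
          · exact h
          · exfalso
            have := hDn _ hn
            rw [hD, ← h, Metric.closedBall_zero] at this
            exact Set.not_nontrivial_singleton this
        rw [hD]
        exact hzero _ hn a r hr' hD.symm.subset
    have hcover : (⋃ n, D (N + n)) = Set.univ := by
      rw [Set.eq_univ_iff_forall]
      intro z
      have hz : z ∈ ⋃ n, D n := hDu ▸ Set.mem_univ z
      obtain ⟨n, hn⟩ := Set.mem_iUnion.1 hz
      exact Set.mem_iUnion.2 ⟨n, hDm (Nat.le_add_left n N) hn⟩
    have := (ae_restrict_iUnion_iff (μ := ν) (fun n => D (N + n)) (fun z => f z = 0)).2 hres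
    rw [hcover, Measure.restrict_univ] at this
    exact this
end

section
/- Let X be a complete separable ultrametric space such that every closed ball of positive diameter is the union of finitely many maximal proper closed subballs and every strictly decreasing sequence of closed balls has diameters tending to zero. Let ν be a Borel measure on X which assigns finite positive measure to every closed ball of positive diameter and to every maximal proper closed subball of such a ball, suppose X is the union of an increasing sequence of closed balls, and suppose ν(X) = A < ∞ (so A is the supremum of the measures of the closed balls). For each closed ball I of positive diameter, with pairwise disjoint maximal proper closed subballs I₁, …, I_{p_I} (p_I ≥ 2), let (ψ_{I,j})_{j=1}^{p_I−1} be an orthonormal basis of the (p_I−1)-dimensional subspace of L²(X,ν) consisting of linear combinations of the indicator functions of I₁, …, I_{p_I} with zero ν-integral. Then the family {ψ_{I,j}} together with the constant function A^{−1/2} is an orthonormal (Hilbert) basis of L²(X,ν). -/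
open MeasureTheory

theorem uw_diam_pos_iff {X : Type*} [MetricSpace X] (B : Set X) :
    0 < EMetric.diam B ↔ B.Nontrivial := Metric.ediam_pos_iff

theorem uw_ball_nonempty {X : Type*} [MetricSpace X] {B : Set X} (hB : IsClosedBall B) :
    B.Nonempty := by
  obtain ⟨a, r, hr, rfl⟩ := hB
  exact ⟨a, Metric.mem_closedBall_self hr⟩

theorem uw_ball_closed {X : Type*} [MetricSpace X] {B : Set X} (hB : IsClosedBall B) :
    IsClosed B := by
  obtain ⟨a, r, hr, rfl⟩ := hB
  exact Metric.isClosed_closedBall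

theorem uw_trichotomy {X : Type*} [MetricSpace X] [IsUltrametricDist X] {B C : Set X}
    (hB : IsClosedBall B) (hC : IsClosedBall C) : B ⊆ C ∨ C ⊆ B ∨ Disjoint B C := by
  obtain ⟨a, r, hr, rfl⟩ := hB
  obtain ⟨b, s, hs, rfl⟩ := hC
  exact @IsUltrametricDist.closedBall_subset_trichotomy X _ _ a b r s

theorem uw_max_eq {X : Type*} [MetricSpace X] [IsUltrametricDist X] {B C D : Set X}
    (hB : IsMaxSubball B D) (hC : IsMaxSubball C D) {x : X} (hxB : x ∈ B) (hxC : x ∈ C) :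
    B = C := by
  by_contra hne
  rcases uw_trichotomy hB.1 hC.1 with h | h | h
  · exact hB.2.2 C hC.1 (h.ssubset_of_ne hne) hC.2.1
  · exact hC.2.2 B hB.1 (h.ssubset_of_ne (Ne.symm hne)) hB.2.1
  · exact Set.disjoint_left.1 h hxB hxC

theorem uw_exists_max {X : Type*} [MetricSpace X] [IsUltrametricDist X]
    (hstruct : ∀ B : Set X, IsClosedBall B → 0 < EMetric.diam B →
      {B' : Set X | IsMaxSubball B' B}.Finite ∧ B = ⋃₀ {B' : Set X | IsMaxSubball B' B})
    {B C : Set X} (hB : IsClosedBall B) (hC : IsClosedBall C) (hCB : C ⊂ B) :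
    0 < EMetric.diam B ∧ ∃ B', IsMaxSubball B' B ∧ C ⊆ B' := by
  obtain ⟨c, hc⟩ := uw_ball_nonempty hC
  have hpos : 0 < EMetric.diam B := by
    rw [uw_diam_pos_iff]
    obtain ⟨y, hyB, hyC⟩ := Set.exists_of_ssubset hCB
    exact ⟨c, hCB.1 hc, y, hyB, fun h => hyC (h ▸ hc)⟩
  refine ⟨hpos, ?_⟩
  have h2 := (hstruct B hB hpos).2
  have : c ∈ ⋃₀ {B' : Set X | IsMaxSubball B' B} := h2 ▸ hCB.1 hc
  obtain ⟨B', hB', hcB'⟩ := this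
  refine ⟨B', hB', ?_⟩
  rcases uw_trichotomy hC hB'.1 with h | h | h
  · exact h
  · by_contra hn
    exact hB'.2.2 C hC (Set.ssubset_iff_subset_ne.2 ⟨h, fun he => hn he.symm.le⟩) hCB
  · exact (Set.disjoint_left.1 h hc hcB').elim

theorem uw_inner_zero {X : Type*} [MeasurableSpace X] {ν : Measure X} {C : Set X}
    {g u : X → ℂ} {h F : Lp ℂ 2 ν} (hg0 : ∀ x ∉ C, g x = 0) (hint : ∫ x, g x ∂ν = 0)
    (hh : (h : X → ℂ) =ᵐ[ν] g) (hu : ∀ x ∈ C, ∀ y ∈ C, u x = u y)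
    (hF : (F : X → ℂ) =ᵐ[ν] u) : inner ℂ F h = 0 := by
  have hc : ∃ c : ℂ, ∀ x, g x * starRingEnd ℂ (u x) = g x * c := by
    rcases C.eq_empty_or_nonempty with rfl | ⟨x0, hx0⟩
    · exact ⟨0, fun x => by simp [hg0 x]⟩
    · refine ⟨starRingEnd ℂ (u x0), fun x => ?_⟩
      by_cases hx : x ∈ C
      · rw [hu x hx x0 hx0]
      · simp [hg0 x hx]
  obtain ⟨c, hc⟩ := hc
  rw [L2.inner_def]
  have : ∫ a, inner ℂ ((F : X → ℂ) a) ((h : X → ℂ) a) ∂ν = ∫ a, g a * c ∂ν := by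
    apply integral_congr_ae
    filter_upwards [hh, hF] with x h1 h2
    rw [h1, h2, ← hc x, RCLike.inner_apply]
  rw [this, integral_mul_const, hint, zero_mul]

theorem uw_mem_span {X : Type*} [MetricSpace X] [IsUltrametricDist X]
    [MeasurableSpace X] [BorelSpace X] {ν : Measure X} [IsFiniteMeasure ν] {B : Set X}
    [Fintype {B' : Set X // IsMaxSubball B' B}]
    (hcov : B = ⋃₀ {B' : Set X | IsMaxSubball B' B})
    {g : X → ℂ} {h : Lp ℂ 2 ν} (hg0 : ∀ x ∉ B, g x = 0)
    (hg : ∀ B' : Set X, IsMaxSubball B' B → ∀ x ∈ B', ∀ y ∈ B', g x = g y)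
    (hh : (h : X → ℂ) =ᵐ[ν] g) :
    h ∈ Submodule.span ℂ (Set.range (fun B' : {B' : Set X // IsMaxSubball B' B} =>
      indicatorConstLp 2 (uw_ball_closed B'.2.1).measurableSet (measure_ne_top ν B'.1) (1 : ℂ))) := by
  classical
  have key : h = ∑ B' : {B' : Set X // IsMaxSubball B' B},
      g (uw_ball_nonempty B'.2.1).some • indicatorConstLp 2
        (uw_ball_closed B'.2.1).measurableSet (measure_ne_top ν B'.1) (1 : ℂ) := by
    apply Lp.ext
    have e1 := Lp.coeFn_finsetSum (μ := ν) (p := 2) Finset.univ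
      (fun B' : {B' : Set X // IsMaxSubball B' B} =>
      g (uw_ball_nonempty B'.2.1).some • indicatorConstLp 2
        (uw_ball_closed B'.2.1).measurableSet (measure_ne_top ν B'.1) (1 : ℂ))
    have e2 : ∀ᵐ x ∂ν, ∀ B' : {B' : Set X // IsMaxSubball B' B},
        (g (uw_ball_nonempty B'.2.1).some • indicatorConstLp 2
        (uw_ball_closed B'.2.1).measurableSet (measure_ne_top ν B'.1) (1 : ℂ) : Lp ℂ 2 ν) x
        = g (uw_ball_nonempty B'.2.1).some * B'.1.indicator (fun _ => 1) x := by
      rw [ae_all_iff]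
      intro B'
      filter_upwards [Lp.coeFn_smul (g (uw_ball_nonempty B'.2.1).some) (indicatorConstLp 2
        (uw_ball_closed B'.2.1).measurableSet (measure_ne_top ν B'.1) (1 : ℂ) : Lp ℂ 2 ν),
        indicatorConstLp_coeFn (p := 2) (hs := (uw_ball_closed B'.2.1).measurableSet)
          (hμs := measure_ne_top ν B'.1) (c := (1 : ℂ))] with x h1 h2
      rw [h1, Pi.smul_apply, h2, smul_eq_mul]
    filter_upwards [hh, e1, e2] with x h1 h2 h3
    rw [h1, h2, Finset.sum_apply, Finset.sum_congr rfl (fun B' _ => h3 B')]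
    by_cases hx : x ∈ B
    · rw [hcov] at hx
      obtain ⟨B', hB', hxB'⟩ := hx
      rw [Finset.sum_eq_single (⟨B', hB'⟩ : {B' : Set X // IsMaxSubball B' B})]
      · simp only [Set.indicator_of_mem hxB', mul_one]
        exact hg B' hB' _ hxB' _ (uw_ball_nonempty hB'.1).some_mem
      · intro C _ hne
        rw [Set.indicator_of_notMem, mul_zero]
        intro hxC
        exact hne (Subtype.ext (uw_max_eq C.2 hB' hxC hxB'))
      · simp
    · rw [hg0 x hx, Finset.sum_eq_zero]
      intro C _
      rw [Set.indicator_of_notMem, mul_zero]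
      exact fun hxC => hx (C.2.2.1.1 hxC)
  rw [key]
  exact Submodule.sum_mem _ fun B' _ => Submodule.smul_mem _ _ (Submodule.subset_span ⟨B', rfl⟩)

theorem uw_step {X : Type*} [MetricSpace X] [IsUltrametricDist X]
    [MeasurableSpace X] [BorelSpace X] {ν : Measure X} [IsFiniteMeasure ν] {B : Set X}
    (hB : IsClosedBall B) (hνB : 0 < ν B)
    (hfin : {B' : Set X | IsMaxSubball B' B}.Finite)
    (hcov : B = ⋃₀ {B' : Set X | IsMaxSubball B' B})
    (n : ℕ) (hn : 2 ≤ n) (hcard : Nat.card {B' : Set X | IsMaxSubball B' B} = n)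
    (φ : Fin (n - 1) → Lp ℂ 2 ν)
    (hform : ∀ j, ∃ g : X → ℂ, (∀ x ∉ B, g x = 0) ∧
      (∀ B' : Set X, IsMaxSubball B' B → ∀ x ∈ B', ∀ y ∈ B', g x = g y) ∧
      (∫ x, g x ∂ν = 0) ∧ (φ j : X → ℂ) =ᵐ[ν] g)
    (hon : Orthonormal ℂ φ) (f : Lp ℂ 2 ν) (hf : ∀ j, inner ℂ (φ j) f = 0)
    {B' : Set X} (hB' : IsMaxSubball B' B) :
    (∫ x in B', f x ∂ν) * (ν.real B : ℂ) = (ν.real B' : ℂ) * ∫ x in B, f x ∂ν := by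
  classical
  haveI : Fintype {B' : Set X // IsMaxSubball B' B} := hfin.fintype
  have hcard' : Fintype.card {B' : Set X // IsMaxSubball B' B} = n := by
    rw [← hcard, ← Nat.card_eq_fintype_card]; rfl
  have hmB := (uw_ball_closed hB).measurableSet
  have hmB' := (uw_ball_closed hB'.1).measurableSet
  set e : Lp ℂ 2 ν := indicatorConstLp 2 hmB (measure_ne_top ν B) (1 : ℂ) with he
  set e' : Lp ℂ 2 ν := indicatorConstLp 2 hmB' (measure_ne_top ν B') (1 : ℂ) with he'
  set U := Submodule.span ℂ (Set.range (fun B' : {B' : Set X // IsMaxSubball B' B} =>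
      (indicatorConstLp 2 (uw_ball_closed B'.2.1).measurableSet
        (measure_ne_top ν B'.1) (1 : ℂ) : Lp ℂ 2 ν))) with hU
  have heφ : ∀ j, inner ℂ e (φ j) = 0 := by
    intro j
    obtain ⟨g, h1, h2, h3, h4⟩ := hform j
    refine uw_inner_zero (u := B.indicator fun _ => 1) h1 h3 h4 ?_ indicatorConstLp_coeFn
    intro x hx y hy
    simp [hx, hy]
  have hee : inner ℂ e e = (ν.real B : ℂ) := by
    rw [he, L2.inner_indicatorConstLp_one_indicatorConstLp_one]; simp
  have hee' : inner ℂ e e' = (ν.real B' : ℂ) := by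
    rw [he, he', L2.inner_indicatorConstLp_one_indicatorConstLp_one,
      Set.inter_eq_right.2 hB'.2.1.1]; simp
  have hBpos : (ν.real B : ℂ) ≠ 0 := by
    have : 0 < ν.real B := ENNReal.toReal_pos hνB.ne' (measure_ne_top ν B)
    exact_mod_cast this.ne'
  let v : Option (Fin (n - 1)) → Lp ℂ 2 ν := fun o => Option.elim o e φ
  have hli : LinearIndependent ℂ v := by
    apply linearIndependent_of_ne_zero_of_inner_eq_zero
    · rintro (_ | j)
      · intro h0
        have h0 : e = 0 := h0
        rw [h0, inner_zero_left] at hee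
        exact hBpos hee.symm
      · exact hon.ne_zero j
    · rintro (_ | i) (_ | j) hij
      · exact (hij rfl).elim
      · exact heφ j
      · exact inner_eq_zero_symm.1 (heφ i)
      · exact hon.2 (fun h => hij (by rw [h]))
  have hle : Submodule.span ℂ (Set.range v) ≤ U := by
    rw [Submodule.span_le]
    rintro _ ⟨o, rfl⟩
    cases o with
    | none =>
      refine uw_mem_span (g := B.indicator fun _ => 1) hcov ?_ ?_ (indicatorConstLp_coeFn (hs := hmB) (hμs := measure_ne_top ν B))
      · intro x hx; simp [hx]
      · intro C hC x hx y hy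
        simp [hC.2.1.1 hx, hC.2.1.1 hy]
    | some j =>
      obtain ⟨g, h1, h2, h3, h4⟩ := hform j
      exact uw_mem_span hcov h1 h2 h4
  have hspan : Submodule.span ℂ (Set.range v) = U := by
    haveI : FiniteDimensional ℂ U := FiniteDimensional.span_of_finite ℂ (Set.finite_range _)
    apply Submodule.eq_of_le_of_finrank_le hle
    rw [finrank_span_eq_card hli]
    refine (finrank_range_le_card _).trans ?_
    rw [hcard', Fintype.card_option, Fintype.card_fin]
    omega
  have hmem : e' ∈ Submodule.span ℂ (Set.range v) := by
    rw [hspan]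
    exact Submodule.subset_span ⟨⟨B', hB'⟩, rfl⟩
  rw [Submodule.mem_span_range_iff_exists_fun] at hmem
  obtain ⟨c, hc⟩ := hmem
  rw [Fintype.sum_option] at hc
  have hc : c none • e + ∑ j, c (some j) • φ j = e' := hc
  have h1 : (ν.real B' : ℂ) = c none * ν.real B := by
    rw [← hee', ← hc, inner_add_right, inner_smul_right, hee, inner_sum, Finset.sum_eq_zero,
      add_zero]
    intro j _
    rw [inner_smul_right, heφ, mul_zero]
  have h2 : (∫ x in B', f x ∂ν) = starRingEnd ℂ (c none) * ∫ x in B, f x ∂ν := by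
    rw [← L2.inner_indicatorConstLp_one (𝕜 := ℂ) hmB' (measure_ne_top ν B') f,
      ← L2.inner_indicatorConstLp_one (𝕜 := ℂ) hmB (measure_ne_top ν B) f, ← he, ← he',
      ← hc, inner_add_left, inner_smul_left, sum_inner, Finset.sum_eq_zero, add_zero]
    intro j _
    rw [inner_smul_left, hf, mul_zero]
  have h3 : starRingEnd ℂ (c none) = c none := by
    have : c none = ((ν.real B' / ν.real B : ℝ) : ℂ) := by
      push_cast
      rw [h1, mul_div_cancel_right₀ _ hBpos]
    rw [this, Complex.conj_ofReal]
  rw [h2, h1, h3]; ring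

theorem uw_real_tendsto {X : Type*} [MeasurableSpace X] {ν : Measure X} [IsFiniteMeasure ν]
    {s : ℕ → Set X} {t : Set X} (h : Filter.Tendsto (ν ∘ s) Filter.atTop (nhds (ν t))) :
    Filter.Tendsto (fun n => (ν.real (s n) : ℂ)) Filter.atTop (nhds (ν.real t : ℂ)) := by
  have := (ENNReal.tendsto_toReal (measure_ne_top ν t)).comp h
  exact (Complex.continuous_ofReal.tendsto _).comp this

theorem uw_nested {X : Type*} [MetricSpace X] [IsUltrametricDist X]
    [MeasurableSpace X] [BorelSpace X] {ν : Measure X} [IsFiniteMeasure ν]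
    (hstruct : ∀ B : Set X, IsClosedBall B → 0 < EMetric.diam B →
      {B' : Set X | IsMaxSubball B' B}.Finite ∧ B = ⋃₀ {B' : Set X | IsMaxSubball B' B})
    (hdiam : ∀ B : ℕ → Set X, (∀ n, IsClosedBall (B n)) → (∀ n, B (n + 1) ⊂ B n) →
      Filter.Tendsto (fun n => EMetric.diam (B n)) Filter.atTop (nhds 0))
    (hνball : ∀ B : Set X, IsClosedBall B → 0 < EMetric.diam B → 0 < ν B ∧ ν B < ⊤)
    (f : X → ℂ) (hfi : Integrable f ν)
    (hstep : ∀ B B' : Set X, IsClosedBall B → 0 < EMetric.diam B → IsMaxSubball B' B →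
      (∫ x in B', f x ∂ν) * (ν.real B : ℂ) = (ν.real B' : ℂ) * ∫ x in B, f x ∂ν)
    {C D : Set X} (hC : IsClosedBall C) (hD : IsClosedBall D) (hCD : C ⊆ D) :
    (∫ x in C, f x ∂ν) * (ν.real D : ℂ) = (ν.real C : ℂ) * ∫ x in D, f x ∂ν := by
  by_contra hcon
  let P : Set X → Prop := fun B => IsClosedBall B ∧ C ⊆ B ∧
    (∫ x in B, f x ∂ν) * (ν.real D : ℂ) = (ν.real B : ℂ) * ∫ x in D, f x ∂ν
  have hnext : ∀ B : {B : Set X // P B}, ∃ B' : {B : Set X // P B}, B'.1 ⊂ B.1 := by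
    rintro ⟨B, hB, hCB, hrel⟩
    have hne : C ≠ B := by
      rintro rfl
      exact hcon hrel
    obtain ⟨hpos, B', hB', hCB'⟩ := uw_exists_max hstruct hB hC (hCB.ssubset_of_ne hne)
    refine ⟨⟨B', hB'.1, hCB', ?_⟩, hB'.2.1⟩
    have hs := hstep B B' hB hpos hB'
    have hBpos : (ν.real B : ℂ) ≠ 0 := by
      have : 0 < ν.real B := ENNReal.toReal_pos (hνball B hB hpos).1.ne' (measure_ne_top ν B)
      exact_mod_cast this.ne'
    apply mul_right_cancel₀ hBpos
    linear_combination (ν.real D : ℂ) * hs + (ν.real B' : ℂ) * hrel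
  choose nx hnx using hnext
  let S : ℕ → {B : Set X // P B} := fun n => nx^[n] ⟨D, hD, hCD, mul_comm _ _⟩
  have hS : ∀ n, (S (n + 1)).1 ⊂ (S n).1 := by
    intro n
    simp only [S, Function.iterate_succ_apply']
    exact hnx _
  have hanti : Antitone (fun n => (S n).1) := antitone_nat_of_succ_le fun n => (hS n).1
  have hlim := hdiam (fun n => (S n).1) (fun n => (S n).2.1) hS
  have hinter : (⋂ n, (S n).1) = C := by
    apply Set.Subset.antisymm
    · intro x hx
      obtain ⟨c, hc⟩ := uw_ball_nonempty hC
      have hx' := Set.mem_iInter.1 hx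
      have : edist x c ≤ 0 := by
        refine ge_of_tendsto' hlim fun n => ?_
        exact Metric.edist_le_ediam_of_mem (hx' n) ((S n).2.2.1 hc)
      have : x = c := edist_le_zero.1 this
      rwa [this]
    · exact Set.subset_iInter fun n => (S n).2.2.1
  have hm : ∀ n, MeasurableSet (S n).1 := fun n => (uw_ball_closed (S n).2.1).measurableSet
  have t1 := tendsto_setIntegral_of_antitone (f := f) (μ := ν) hm hanti ⟨0, hfi.integrableOn⟩
  have t2 := uw_real_tendsto (tendsto_measure_iInter_atTop (μ := ν)
    (fun n => (hm n).nullMeasurableSet) hanti ⟨0, measure_ne_top ν _⟩)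
  rw [hinter] at t1 t2
  apply hcon
  refine tendsto_nhds_unique (t1.mul_const _) ?_
  refine (t2.mul_const _).congr fun n => ?_
  exact (S n).2.2.2.symm

theorem uw_zero {X : Type*} [MetricSpace X] [IsUltrametricDist X]
    [TopologicalSpace.SeparableSpace X]
    [MeasurableSpace X] [BorelSpace X] {ν : Measure X} [IsFiniteMeasure ν]
    (f : X → ℂ) (hfi : Integrable f ν) (h0 : ∫ x, f x ∂ν = 0)
    (hball : ∀ C, IsClosedBall C → ∫ x in C, f x ∂ν = 0) : f =ᵐ[ν] 0 := by
  haveI : SecondCountableTopology X := UniformSpace.secondCountable_of_separable X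
  let s : Set (Set X) := {B | ∃ (a : X) (r : ℝ), 0 < r ∧ B = Metric.closedBall a r}
  have hs : ∀ B ∈ s, IsClosedBall B := by
    rintro B ⟨a, r, hr, rfl⟩
    exact ⟨a, r, hr.le, rfl⟩
  have hbasis : TopologicalSpace.IsTopologicalBasis s := by
    apply TopologicalSpace.isTopologicalBasis_of_isOpen_of_nhds
    · rintro B ⟨a, r, hr, rfl⟩
      exact IsUltrametricDist.isOpen_closedBall _ hr.ne'
    · intro a u ha hu
      obtain ⟨r, hr, hru⟩ := Metric.nhds_basis_closedBall.mem_iff.1 (hu.mem_nhds ha)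
      exact ⟨_, ⟨a, r, hr, rfl⟩, Metric.mem_closedBall_self hr.le, hru⟩
  have hpi : IsPiSystem s := by
    intro B hB C hC hne
    rcases uw_trichotomy (hs B hB) (hs C hC) with h | h | h
    · rwa [Set.inter_eq_left.2 h]
    · rwa [Set.inter_eq_right.2 h]
    · exact (hne.ne_empty h.inter_eq).elim
  have hgen : ‹MeasurableSpace X› = MeasurableSpace.generateFrom s := by
    rw [← hbasis.borel_eq_generateFrom]; exact BorelSpace.measurable_eq
  refine hfi.ae_eq_zero_of_forall_setIntegral_eq_zero fun t ht _ => ?_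
  refine MeasurableSpace.induction_on_inter (C := fun t _ => ∫ x in t, f x ∂ν = 0)
    hgen hpi ?_ ?_ ?_ ?_ t ht
  · simp
  · exact fun t ht => hball t (hs t ht)
  · intro t ht h
    rw [setIntegral_compl ht hfi, h, h0, sub_zero]
  · intro F hd hm h
    rw [integral_iUnion hm hd hfi.integrableOn]
    simp [h]

/-- The basis of ultrametric wavelets, case of finite total measure `A = ν(X) < ∞`:
the wavelet family `{ψ_{I,j}}` together with the constant function `A^{-1/2}` is an
orthonormal Hilbert basis of `L²(X,ν)`. -/
theorem ultrametric_wavelets_orthonormal_basis_finite_measure {X : Type*} [MetricSpace X]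
    [IsUltrametricDist X] [CompleteSpace X] [TopologicalSpace.SeparableSpace X]
    [MeasurableSpace X] [BorelSpace X] (ν : Measure X)
    (hstruct : ∀ B : Set X, IsClosedBall B → 0 < EMetric.diam B →
      {B' : Set X | IsMaxSubball B' B}.Finite ∧ B = ⋃₀ {B' : Set X | IsMaxSubball B' B})
    (hdiam : ∀ B : ℕ → Set X, (∀ n, IsClosedBall (B n)) → (∀ n, B (n + 1) ⊂ B n) →
      Filter.Tendsto (fun n => EMetric.diam (B n)) Filter.atTop (nhds 0))
    (hνball : ∀ B : Set X, IsClosedBall B → 0 < EMetric.diam B → 0 < ν B ∧ ν B < ⊤)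
    (hνsub : ∀ B B' : Set X, IsClosedBall B → 0 < EMetric.diam B → IsMaxSubball B' B →
      0 < ν B' ∧ ν B' < ⊤)
    -- `X` is the union of an increasing sequence of closed balls
    (hexh : ∃ D : ℕ → Set X, (∀ n, IsClosedBall (D n)) ∧ Monotone D ∧
      (⋃ n, D n) = Set.univ)
    -- the total measure `A = ν(X)` (the supremum of measures of balls) is finite and positive
    (hA : ν Set.univ < ⊤) (hA0 : ν Set.univ ≠ 0)
    -- `p B` is the number of maximal proper closed subballs of `B`
    (p : Set X → ℕ)
    (hp : ∀ B : Set X, IsClosedBall B → 0 < EMetric.diam B →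
      2 ≤ p B ∧ Nat.card {B' : Set X | IsMaxSubball B' B} = p B)
    -- the wavelet family, indexed by balls `I` of positive diameter and `1 ≤ j ≤ p_I - 1`
    (ψ : (Σ B : {B : Set X // IsClosedBall B ∧ 0 < EMetric.diam B}, Fin (p B.1 - 1)) →
      Lp ℂ 2 ν)
    -- each `ψ_{I,j}` is (a.e.) a linear combination of indicators of the maximal
    -- subballs of `I` with zero mean
    (hform : ∀ i, ∃ g : X → ℂ, (∀ x ∉ i.1.1, g x = 0) ∧
      (∀ B' : Set X, IsMaxSubball B' i.1.1 → ∀ x ∈ B', ∀ y ∈ B', g x = g y) ∧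
      (∫ x, g x ∂ν = 0) ∧ (ψ i : X → ℂ) =ᵐ[ν] g)
    -- for each ball `I`, the family `(ψ_{I,j})_j` is orthonormal (hence an orthonormal
    -- basis of the `(p_I - 1)`-dimensional zero-mean space)
    (hon : ∀ B : {B : Set X // IsClosedBall B ∧ 0 < EMetric.diam B},
      Orthonormal ℂ (fun j : Fin (p B.1 - 1) => ψ ⟨B, j⟩))
    -- `ψ₀` is the constant function `A^{-1/2}`
    (ψ₀ : Lp ℂ 2 ν)
    (hψ₀ : (ψ₀ : X → ℂ) =ᵐ[ν] fun _ => ((Real.sqrt (ν Set.univ).toReal)⁻¹ : ℂ)) :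
    Orthonormal ℂ (fun o => Option.elim o ψ₀ ψ) ∧
    (Submodule.span ℂ (Set.range (fun o => Option.elim o ψ₀ ψ))).topologicalClosure = ⊤ := by
  classical
  haveI : IsFiniteMeasure ν := ⟨hA⟩
  have hR : 0 < (ν Set.univ).toReal := ENNReal.toReal_pos hA0 hA.ne
  have hψ₀i : ∀ i, inner ℂ ψ₀ (ψ i) = 0 := by
    intro i
    obtain ⟨g, h1, h2, h3, h4⟩ := hform i
    exact uw_inner_zero h1 h3 h4 (fun _ _ _ _ => rfl) hψ₀
  have hcross : ∀ i j, i.1 ≠ j.1 → ¬ (i.1.1 ⊆ j.1.1) → inner ℂ (ψ i) (ψ j) = 0 := by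
    intro i j hne hns
    obtain ⟨g, h1, h2, h3, h4⟩ := hform j
    obtain ⟨u, k1, k2, k3, k4⟩ := hform i
    refine uw_inner_zero h1 h3 h4 ?_ k4
    rcases uw_trichotomy i.1.2.1 j.1.2.1 with h | h | h
    · exact (hns h).elim
    · obtain ⟨_, B', hB', hCB'⟩ := uw_exists_max hstruct i.1.2.1 j.1.2.1
        (h.ssubset_of_ne fun he => hne (Subtype.ext he.symm))
      exact fun x hx y hy => k2 B' hB' x (hCB' hx) y (hCB' hy)
    · intro x hx y hy
      rw [k1 x (Set.disjoint_right.1 h hx), k1 y (Set.disjoint_right.1 h hy)]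
  have hψψ : ∀ i j, i ≠ j → inner ℂ (ψ i) (ψ j) = 0 := by
    intro i j hij
    by_cases hb : i.1 = j.1
    · obtain ⟨b, i⟩ := i
      obtain ⟨b', j⟩ := j
      dsimp only at hb
      subst hb
      exact (hon b).2 fun h => hij (by rw [h])
    · by_cases hs : i.1.1 ⊆ j.1.1
      · apply inner_eq_zero_symm.1
        exact hcross j i (Ne.symm hb) fun hs' => hb (Subtype.ext (hs.antisymm hs'))
      · exact hcross i j hb hs
  refine ⟨⟨?_, ?_⟩, ?_⟩
  · rintro (_ | i)
    · change ‖ψ₀‖ = 1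
      have h : inner ℂ ψ₀ ψ₀ = (1 : ℂ) := by
        rw [L2.inner_def]
        have : ∫ a, inner ℂ ((ψ₀ : X → ℂ) a) ((ψ₀ : X → ℂ) a) ∂ν
            = ∫ a : X, (((ν Set.univ).toReal⁻¹ : ℝ) : ℂ) ∂ν := by
          apply integral_congr_ae
          filter_upwards [hψ₀] with x hx
          rw [hx, RCLike.inner_apply, ← Complex.ofReal_inv, Complex.conj_ofReal,
            ← Complex.ofReal_mul, ← mul_inv, Real.mul_self_sqrt hR.le]
        rw [this, integral_const, Measure.real, Complex.real_smul, ← Complex.ofReal_mul,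
          mul_inv_cancel₀ hR.ne', Complex.ofReal_one]
      have h' : ‖ψ₀‖ ^ 2 = 1 := by
        rw [← inner_self_eq_norm_sq (𝕜 := ℂ) ψ₀, h]
        simp
      exact (pow_eq_one_iff_of_nonneg (norm_nonneg ψ₀) two_ne_zero).1 h'
    · exact (hon i.1).1 i.2
  · rintro (_ | i) (_ | j) hij
    · exact (hij rfl).elim
    · exact hψ₀i j
    · exact inner_eq_zero_symm.1 (hψ₀i i)
    · exact hψψ i j fun h => hij (by rw [h])
  · rw [Submodule.topologicalClosure_eq_top_iff, Submodule.eq_bot_iff]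
    intro f hf
    have hf' : ∀ o : Option _, inner ℂ (Option.elim o ψ₀ ψ) f = 0 := fun o =>
      (Submodule.mem_orthogonal _ _).1 hf _ (Submodule.subset_span ⟨o, rfl⟩)
    have hfi : Integrable (f : X → ℂ) ν := (Lp.memLp f).integrable (by norm_num)
    have h0 : ∫ x, f x ∂ν = 0 := by
      have h := hf' none
      change inner ℂ ψ₀ f = 0 at h
      rw [L2.inner_def] at h
      have e : ∫ a, inner ℂ ((ψ₀ : X → ℂ) a) ((f : X → ℂ) a) ∂ν
          = ∫ a, (f : X → ℂ) a * (((Real.sqrt (ν Set.univ).toReal)⁻¹ : ℝ) : ℂ) ∂ν := by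
        apply integral_congr_ae
        filter_upwards [hψ₀] with x hx
        rw [hx, RCLike.inner_apply, ← Complex.ofReal_inv, Complex.conj_ofReal]
      rw [e, integral_mul_const] at h
      refine (mul_eq_zero.1 h).resolve_right ?_
      exact_mod_cast (inv_pos.2 (Real.sqrt_pos.2 hR)).ne'
    have hstep : ∀ B B' : Set X, IsClosedBall B → 0 < EMetric.diam B → IsMaxSubball B' B →
        (∫ x in B', f x ∂ν) * (ν.real B : ℂ) = (ν.real B' : ℂ) * ∫ x in B, f x ∂ν := by
      intro B B' hB hpos hB'
      exact uw_step hB (hνball B hB hpos).1 (hstruct B hB hpos).1 (hstruct B hB hpos).2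
        (p B) (hp B hB hpos).1 (hp B hB hpos).2 (fun j => ψ ⟨⟨B, hB, hpos⟩, j⟩)
        (fun j => hform ⟨⟨B, hB, hpos⟩, j⟩) (hon ⟨B, hB, hpos⟩) f
        (fun j => hf' (some ⟨⟨B, hB, hpos⟩, j⟩)) hB'
    have hball : ∀ C, IsClosedBall C → ∫ x in C, f x ∂ν = 0 := by
      intro C hC
      obtain ⟨D, hD, hmono, hun⟩ := hexh
      have t1 := tendsto_setIntegral_of_monotone (f := (f : X → ℂ)) (μ := ν)
        (fun n => (uw_ball_closed (hD n)).measurableSet) hmono hfi.integrableOn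
      have t2 := uw_real_tendsto (tendsto_measure_iUnion_atTop (μ := ν) hmono)
      rw [hun] at t1 t2
      rw [setIntegral_univ, h0] at t1
      obtain ⟨c, hc⟩ := uw_ball_nonempty hC
      obtain ⟨N, hN⟩ := Set.mem_iUnion.1 (hun.symm ▸ Set.mem_univ c : c ∈ ⋃ n, D n)
      by_cases hex : ∃ n, C ⊆ D n
      · obtain ⟨M, hM⟩ := hex
        have hlim : (∫ x in C, f x ∂ν) * (ν.real Set.univ : ℂ) = (ν.real C : ℂ) * 0 := by
          refine tendsto_nhds_unique_of_eventuallyEq (t2.const_mul _) (t1.const_mul _) ?_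
          filter_upwards [Filter.eventually_ge_atTop M] with n hn
          exact uw_nested hstruct hdiam hνball f hfi hstep hC (hD n) (hM.trans (hmono hn))
        rw [mul_zero] at hlim
        refine (mul_eq_zero.1 hlim).resolve_right ?_
        exact_mod_cast hR.ne'
      · have hCu : C = Set.univ := by
          rw [Set.eq_univ_iff_forall]
          intro x
          obtain ⟨M, hM⟩ := Set.mem_iUnion.1 (hun.symm ▸ Set.mem_univ x : x ∈ ⋃ n, D n)
          push Not at hex
          rcases uw_trichotomy hC (hD (max M N)) with h | h | h
          · exact (hex _ h).elim
          · exact h (hmono (le_max_left M N) hM)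
          · exact (Set.disjoint_left.1 h hc (hmono (le_max_right M N) hN)).elim
        rw [hCu, setIntegral_univ, h0]
    apply Lp.ext
    exact (uw_zero f hfi h0 hball).trans (Lp.coeFn_zero _ _ _).symm
end

section
/- Let X be a separable ultrametric space which is the union of a countable increasing sequence of closed balls, and let ν be a Borel measure on X which is finite on closed balls. Then the linear span of the indicator functions of closed balls of X is dense in L²(X,ν). -/
open MeasureTheory

theorem inter_ball_aux {X : Type*} [MetricSpace X] [IsUltrametricDist X] {A B : Set X}
    (hA : IsClosedBall A) (hB : IsClosedBall B) : A ∩ B = A ∨ A ∩ B = B ∨ A ∩ B = ∅ := by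
  obtain ⟨a, r, hr, rfl⟩ := hA
  obtain ⟨b, s, hs, rfl⟩ := hB
  rcases IsUltrametricDist.closedBall_subset_trichotomy a b r s with h | h | h
  · exact Or.inl (Set.inter_eq_left.2 h)
  · exact Or.inr (Or.inl (Set.inter_eq_right.2 h))
  · exact Or.inr (Or.inr h.inter_eq)

/-- In a separable ultrametric space which is the union of a countable increasing
sequence of closed balls, with a Borel measure finite on closed balls, the linear
span of the indicator functions of closed balls is dense in `L²(X,ν)`. -/
theorem ultrametric_ball_indicators_dense {X : Type*} [MetricSpace X]
    [IsUltrametricDist X] [TopologicalSpace.SeparableSpace X]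
    [MeasurableSpace X] [BorelSpace X] (ν : Measure X)
    (hexh : ∃ D : ℕ → Set X, (∀ n, IsClosedBall (D n)) ∧ Monotone D ∧
      (⋃ n, D n) = Set.univ)
    (hν : ∀ B : Set X, IsClosedBall B → ν B < ⊤) :
    (Submodule.span ℂ {g : Lp ℂ 2 ν |
        ∃ (B : Set X) (hm : MeasurableSet B) (hfin : ν B ≠ ⊤),
          IsClosedBall B ∧ g = indicatorConstLp 2 hm hfin (1 : ℂ)}).topologicalClosure
      = ⊤ := by
  have : SecondCountableTopology X := UniformSpace.secondCountable_of_separable X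
  rw [Submodule.topologicalClosure_eq_top_iff, Submodule.eq_bot_iff]
  intro f hf
  have hmeas : ∀ B : Set X, IsClosedBall B → MeasurableSet B := by
    rintro B ⟨a, r, hr, rfl⟩
    exact Metric.isClosed_closedBall.measurableSet
  have hball : ∀ B : Set X, IsClosedBall B → ∫ x in B, f x ∂ν = 0 := by
    intro B hB
    have h := (Submodule.mem_orthogonal _ _).1 hf
      (indicatorConstLp 2 (hmeas B hB) (hν B hB).ne (1 : ℂ))
      (Submodule.subset_span ⟨B, hmeas B hB, (hν B hB).ne, hB, rfl⟩)
    rwa [L2.inner_indicatorConstLp_one] at h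
  obtain ⟨D, hD, -, hU⟩ := hexh
  let S : Set (Set X) := {B | ∃ (a : X) (r : ℝ), 0 < r ∧ B = Metric.closedBall a r}
  have hS : ∀ B ∈ S, IsClosedBall B := by
    rintro B ⟨a, r, hr, rfl⟩
    exact ⟨a, r, hr.le, rfl⟩
  have hbasis : TopologicalSpace.IsTopologicalBasis S := by
    refine TopologicalSpace.isTopologicalBasis_of_isOpen_of_nhds ?_ ?_
    · rintro B ⟨a, r, hr, rfl⟩
      exact IsUltrametricDist.isOpen_closedBall a hr.ne'
    · intro a u ha hu
      obtain ⟨r, hr, h⟩ := Metric.nhds_basis_closedBall.mem_iff.1 (hu.mem_nhds ha)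
      exact ⟨_, ⟨a, r, hr, rfl⟩, Metric.mem_closedBall_self hr.le, h⟩
  have hgen : ‹MeasurableSpace X› = MeasurableSpace.generateFrom S := by
    rw [← hbasis.borel_eq_generateFrom]
    exact BorelSpace.measurable_eq
  have hpi : IsPiSystem S := by
    intro A hA B hB hne
    rcases inter_ball_aux (hS A hA) (hS B hB) with h | h | h
    · rwa [h]
    · rwa [h]
    · exact absurd h hne.ne_empty
  have hzero : ∀ n, ∀ᵐ x ∂(ν.restrict (D n)), f x = 0 := by
    intro n
    have hint : Integrable f (ν.restrict (D n)) :=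
      integrableOn_Lp_of_measure_ne_top f one_le_two (hν _ (hD n)).ne
    have key : ∀ s, MeasurableSet s → ∫ x in s, f x ∂(ν.restrict (D n)) = 0 := by
      intro s hs
      induction s, hs using MeasurableSpace.induction_on_inter hgen hpi with
      | empty => simp
      | basic t ht =>
        rw [Measure.restrict_restrict (hmeas t (hS t ht))]
        rcases inter_ball_aux (hS t ht) (hD n) with h | h | h
        · rw [h]; exact hball _ (hS t ht)
        · rw [h]; exact hball _ (hD n)
        · rw [h]; simp
      | compl t htm ih =>
        have h := integral_add_compl htm hint
        rw [ih, zero_add, hball _ (hD n)] at h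
        exact h
      | iUnion g hd hm ih =>
        rw [integral_iUnion hm hd hint.integrableOn]
        simp [ih]
    exact hint.ae_eq_zero_of_forall_setIntegral_eq_zero (fun s hs _ => key s hs)
  have hall : ∀ᵐ x ∂ν, f x = 0 := by
    have h := (ae_restrict_iUnion_iff (μ := ν) D (fun x => f x = 0)).2 hzero
    have hr : ν.restrict (⋃ n, D n) = ν := by rw [hU, Measure.restrict_univ]
    rwa [congrArg ae hr] at h
  exact (Lp.eq_zero_iff_ae_eq_zero).2 hall
end

section
/- Let X be an ultrametric space, ν a Borel measure on X, and B a closed ball of positive diameter which is the union of its pairwise disjoint maximal proper closed subballs B₁, …, B_p (p ≥ 2), with ν(B) < ∞. Let k : X × X → [0,∞) be a measurable sup-kernel. Then: (a) k(x,y) takes one common value t_B for all pairs x ∈ B_i, y ∈ B_j with i ≠ j; (b) the integral ∫_{X∖B} k(x,y) dν(y) takes one common value Λ ∈ [0,∞] for all x ∈ B; (c) if Λ < ∞, then for every function ψ : X → ℂ which vanishes outside B, is constant on each B_i, and satisfies ∫ ψ dν = 0, and for every x ∈ X, the integral ∫ k(x,y)(ψ(x) − ψ(y)) dν(y) converges absolutely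 and equals λ·ψ(x), where λ = t_B·ν(B) + Λ. That is, ψ is an eigenfunction of the ultrametric pseudodifferential operator Tf(x) = ∫ k(x,y)(f(x) − f(y)) dν(y) with eigenvalue λ = t_B·ν(B) + Λ. -/
open MeasureTheory
open scoped ENNReal

/-- Wavelets are eigenfunctions of the ultrametric pseudodifferential operator.
Let `B` be a closed ball of positive diameter which is the disjoint union of its
maximal proper closed subballs `B₁, …, B_p` (`p ≥ 2`), `ν B < ∞`, and let `k` be a
measurable sup-kernel. Then: (a) `k` has one common value `t` on pairs from distinct
subballs; (b) `∫_{X∖B} k(x,y) dν(y)` has one common value `Λ ∈ [0,∞]` for `x ∈ B`;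
(c) if `Λ < ∞` then every zero-mean `ψ` supported in `B` and constant on each `Bᵢ`
satisfies `∫ k(x,y)(ψ(x)−ψ(y)) dν(y) = (t·ν(B) + Λ)·ψ(x)` with absolutely convergent
integral, for every `x ∈ X`. -/
theorem ultrametric_wavelet_eigenfunction {X : Type*} [MetricSpace X]
    [IsUltrametricDist X] [MeasurableSpace X] [BorelSpace X] (ν : Measure X)
    (k : X → X → ℝ) (hk0 : ∀ x y, 0 ≤ k x y)
    (hkm : Measurable (Function.uncurry k))
    -- `k` is a sup-kernel: `k(x,y)` depends only on the minimal ball `sup(x,y)`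
    (hsup : ∀ x y x' y' : X,
      Metric.closedBall x (dist x y) = Metric.closedBall x' (dist x' y') →
        k x y = k x' y')
    {B : Set X} (hB : IsClosedBall B) (hdB : 0 < EMetric.diam B) (hνB : ν B < ⊤)
    (p : ℕ) (hp : 2 ≤ p) (Bs : Fin p → Set X)
    (hBs : ∀ i, IsMaxSubball (Bs i) B)
    (hdisj : Pairwise (Function.onFun Disjoint Bs))
    (hcover : B = ⋃ i, Bs i) :
    ∃ (t : ℝ) (Λ : ℝ≥0∞),
      (∀ i j, i ≠ j → ∀ x ∈ Bs i, ∀ y ∈ Bs j, k x y = t) ∧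
      (∀ x ∈ B, ∫⁻ y in Bᶜ, ENNReal.ofReal (k x y) ∂ν = Λ) ∧
      (Λ ≠ ⊤ → ∀ ψ : X → ℂ, (∀ x ∉ B, ψ x = 0) →
        (∀ i : Fin p, ∀ x ∈ Bs i, ∀ y ∈ Bs i, ψ x = ψ y) →
        (∫ x, ψ x ∂ν = 0) →
        ∀ x : X,
          Integrable (fun y => (k x y : ℂ) * (ψ x - ψ y)) ν ∧
          ∫ y, (k x y : ℂ) * (ψ x - ψ y) ∂ν
            = ((t * (ν B).toReal + Λ.toReal : ℝ) : ℂ) * ψ x) := by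
  obtain ⟨a, r, hr, hBar⟩ := hB
  have hBx : ∀ x ∈ B, B = Metric.closedBall x r := by
    intro x hx
    rw [hBar] at hx ⊢
    exact IsUltrametricDist.closedBall_eq_of_mem hx
  have hBmeas : MeasurableSet B := by
    rw [hBar]; exact Metric.isClosed_closedBall.measurableSet
  have hsub : ∀ i, Bs i ⊆ B := fun i => (hBs i).2.1.1
  have key1 : ∀ i j, i ≠ j → ∀ x ∈ Bs i, ∀ y ∈ Bs j,
      Metric.closedBall x (dist x y) = B := by
    intro i j hij x hx y hy
    obtain ⟨⟨a', r', hr', hB'⟩, hss, hmax⟩ := hBs i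
    have hyi : y ∉ Bs i := fun h => Set.disjoint_left.1 (hdisj hij) h hy
    have hB'x : Bs i = Metric.closedBall x r' := by
      rw [hB'] at hx ⊢
      exact IsUltrametricDist.closedBall_eq_of_mem hx
    have hlt : r' < dist x y := by
      rw [hB'x, Metric.mem_closedBall, dist_comm] at hyi
      exact not_le.1 hyi
    have hle : dist x y ≤ r := by
      have h := hsub j hy
      rw [hBx x (hsub i hx), Metric.mem_closedBall, dist_comm] at h
      exact h
    have h1 : Metric.closedBall x (dist x y) ⊆ B := by
      rw [hBx x (hsub i hx)]
      exact Metric.closedBall_subset_closedBall hle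
    have h2 : Bs i ⊂ Metric.closedBall x (dist x y) := by
      refine ⟨?_, fun h => hyi (h ?_)⟩
      · rw [hB'x]; exact Metric.closedBall_subset_closedBall hlt.le
      · rw [Metric.mem_closedBall, dist_comm]
    by_contra hne
    exact hmax _ ⟨x, _, dist_nonneg, rfl⟩ h2 (HasSubset.Subset.ssubset_of_ne h1 hne)
  have hdist : ∀ x ∈ B, ∀ x' ∈ B, ∀ y ∉ B, dist x' y ≤ dist x y ∧ r < dist x y := by
    intro x hx x' hx' y hy
    have h1 : r < dist x y := by
      rw [hBx x hx, Metric.mem_closedBall, dist_comm] at hy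
      exact not_le.1 hy
    have h2 : dist x' x ≤ r := by
      rw [hBx x hx, Metric.mem_closedBall] at hx'
      exact hx'
    exact ⟨(dist_triangle_max x' x y).trans (max_le (h2.trans h1.le) le_rfl), h1⟩
  have hdeq : ∀ x ∈ B, ∀ x' ∈ B, ∀ y ∉ B, dist x y = dist x' y := fun x hx x' hx' y hy =>
    le_antisymm (hdist x' hx' x hx y hy).1 (hdist x hx x' hx' y hy).1
  have key2 : ∀ x ∈ B, ∀ x' ∈ B, ∀ y ∉ B, k x y = k x' y := by
    intro x hx x' hx' y hy
    apply hsup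
    rw [← hdeq x hx x' hx' y hy]
    apply IsUltrametricDist.closedBall_eq_of_mem
    rw [hBx x hx] at hx'
    exact Metric.closedBall_subset_closedBall (hdist x hx x hx y hy).2.le hx'
  have key3 : ∀ x ∉ B, ∀ y ∈ B, ∀ y' ∈ B, k x y = k x y' := by
    intro x hx y hy y' hy'
    apply hsup
    rw [dist_comm x y, dist_comm x y', hdeq y hy y' hy' x hx]
  have hne : ∀ i, (Bs i).Nonempty := by
    intro i
    obtain ⟨⟨a', r', hr', hB'⟩, -⟩ := hBs i
    exact ⟨a', by rw [hB']; exact Metric.mem_closedBall_self hr'⟩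
  have hBsm : ∀ i, MeasurableSet (Bs i) := by
    intro i
    obtain ⟨⟨a', r', hr', hB'⟩, -⟩ := hBs i
    rw [hB']; exact Metric.isClosed_closedBall.measurableSet
  have haB : a ∈ B := by rw [hBar]; exact Metric.mem_closedBall_self hr
  obtain ⟨u, hu⟩ := hne ⟨0, by omega⟩
  obtain ⟨v, hv⟩ := hne ⟨1, by omega⟩
  have huv := key1 _ _ (by simp) u hu v hv
  have ha : ∀ i j, i ≠ j → ∀ x ∈ Bs i, ∀ y ∈ Bs j, k x y = k u v :=
    fun i j hij x hx y hy => hsup _ _ _ _ ((key1 i j hij x hx y hy).trans huv.symm)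
  have hb : ∀ x ∈ B, ∫⁻ y in Bᶜ, ENNReal.ofReal (k x y) ∂ν
      = ∫⁻ y in Bᶜ, ENNReal.ofReal (k a y) ∂ν := by
    intro x hx
    refine setLIntegral_congr_fun hBmeas.compl fun y hy => ?_
    simp only [key2 x hx a haB y hy]
  refine ⟨k u v, ∫⁻ y in Bᶜ, ENNReal.ofReal (k a y) ∂ν, ha, hb, ?_⟩
  intro hΛ ψ hψ0 hψc hψi x
  have hψint : Integrable ψ ν := by
    have h1 : IntegrableOn ψ B ν := by
      rw [hcover]
      refine integrableOn_finite_iUnion.2 fun i => ?_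
      obtain ⟨z, hz⟩ := hne i
      have h2 : IntegrableOn (fun _ => ψ z) (Bs i) ν :=
        integrableOn_const ((measure_mono (hsub i)).trans_lt hνB).ne
      exact h2.congr_fun (fun y hy => hψc i z hz y hy) (hBsm i)
    exact (integrableOn_iff_integrable_of_support_subset (fun y hy => by
      by_contra h; exact hy (hψ0 y h))).1 h1
  by_cases hx : x ∈ B
  · obtain ⟨i, hi⟩ : ∃ i, x ∈ Bs i := by
      have h := hx
      rw [hcover] at h
      exact Set.mem_iUnion.1 h
    have e1 : Set.EqOn (fun y => (k u v : ℂ) * (ψ x - ψ y))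
        (fun y => (k x y : ℂ) * (ψ x - ψ y)) B := by
      intro y hy
      obtain ⟨j, hj⟩ : ∃ j, y ∈ Bs j := by
        rw [hcover] at hy
        exact Set.mem_iUnion.1 hy
      by_cases hij : i = j
      · subst hij
        simp [hψc i x hi y hj]
      · simp only [ha i j hij x hi y hj]
    have e2 : Set.EqOn (fun y => (k x y : ℂ) * ψ x)
        (fun y => (k x y : ℂ) * (ψ x - ψ y)) Bᶜ := by
      intro y hy
      simp [hψ0 y hy]
    have hkx : Measurable (k x) := hkm.of_uncurry_left
    have hkint : IntegrableOn (k x) Bᶜ ν := by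
      refine ⟨hkx.aestronglyMeasurable, ?_⟩
      rw [hasFiniteIntegral_iff_ofReal (Filter.Eventually.of_forall (hk0 x)), hb x hx]
      exact hΛ.lt_top
    have hkval : ∫ y in Bᶜ, k x y ∂ν = (∫⁻ y in Bᶜ, ENNReal.ofReal (k a y) ∂ν).toReal := by
      rw [integral_eq_lintegral_of_nonneg_ae (Filter.Eventually.of_forall (hk0 x))
        hkx.aestronglyMeasurable, hb x hx]
    have hc : IntegrableOn (fun _ => ψ x) B ν := integrableOn_const hνB.ne
    have i1' : IntegrableOn (fun y => (k u v : ℂ) * (ψ x - ψ y)) B ν :=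
      (hc.sub hψint.integrableOn).const_mul _
    have i1 := i1'.congr_fun e1 hBmeas
    have i2' : IntegrableOn (fun y => (k x y : ℂ) * ψ x) Bᶜ ν :=
      (Integrable.ofReal hkint).mul_const _
    have i2 := i2'.congr_fun e2 hBmeas.compl
    have hI : Integrable (fun y => (k x y : ℂ) * (ψ x - ψ y)) ν := by
      rw [← integrableOn_univ, ← Set.union_compl_self B]
      exact i1.union i2
    refine ⟨hI, ?_⟩
    have hψB : ∫ y in B, ψ y ∂ν = 0 := by
      rw [setIntegral_eq_integral_of_forall_compl_eq_zero hψ0, hψi]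
    rw [← integral_add_compl hBmeas hI, ← setIntegral_congr_fun hBmeas e1,
      ← setIntegral_congr_fun hBmeas.compl e2, integral_const_mul, integral_mul_const,
      integral_sub hc hψint.integrableOn, hψB, setIntegral_const, integral_complex_ofReal, hkval]
    simp only [Measure.real, Complex.real_smul]
    push_cast
    ring
  · have e : (fun y => (k x y : ℂ) * (ψ x - ψ y)) = fun y => (-(k x a : ℂ)) * ψ y := by
      funext y
      by_cases hy : y ∈ B
      · rw [hψ0 x hx, key3 x hx y hy a haB]; ring
      · rw [hψ0 x hx, hψ0 y hy]; ring
    rw [e]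
    refine ⟨hψint.const_mul _, ?_⟩
    rw [integral_const_mul, hψi, hψ0 x hx]
    simp
end

section
/- Let X be an ultrametric space, ν a Borel measure on X, and C : X × X → ℂ a function such that C(x,x') = C(y,y') whenever the closed balls B̄(x, d(x,x')) and B̄(y, d(y,y')) coincide as sets (i.e., C(x,x') depends only on the minimal ball sup(x,x') containing x and x'). Let I and J be disjoint closed balls, let f : X → ℂ be ν-integrable, vanish outside I, and satisfy ∫ f dν = 0, and let g : X → ℂ be ν-integrable and vanish outside J. Then the function (x,x') ↦ conj(f(x))·C(x,x')·g(x') is ν⊗ν-integrable and ∬ conj(f(x))·C(x,x')·g(x') dν(x) dν(x') = 0. (This is the deterministic content of ultrametric Markovianity: for a Gaussian random field whose covariance depends only on sup(x,x'), the random variables ∫_I ψ f dν and ∫_J ψ g dν, over disjoint balls I and J with at least one of f, g of zero mean, are uncorrelated and hence independent.) -/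
open MeasureTheory

/-- Deterministic content of ultrametric Markovianity: if the covariance `C(x,x')`
depends only on the minimal ball `sup(x,x')`, and `f`, `g` are integrable functions
supported in disjoint closed balls `I`, `J` with `f` of zero mean, then
`∬ conj(f(x))·C(x,x')·g(x') dν(x) dν(x') = 0` (with absolute convergence). -/
theorem ultrametric_markov_uncorrelated {X : Type*} [MetricSpace X] [IsUltrametricDist X]
    [MeasurableSpace X] [BorelSpace X] (ν : Measure X) [SFinite ν]
    (C : X → X → ℂ)
    (hC : ∀ x x' y y' : X,
      Metric.closedBall x (dist x x') = Metric.closedBall y (dist y y') →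
        C x x' = C y y')
    {I J : Set X} (hI : IsClosedBall I) (hJ : IsClosedBall J) (hd : Disjoint I J)
    (f g : X → ℂ)
    (hf : Integrable f ν) (hf0 : ∀ x ∉ I, f x = 0) (hfm : ∫ x, f x ∂ν = 0)
    (hg : Integrable g ν) (hg0 : ∀ x ∉ J, g x = 0) :
    Integrable (fun q : X × X => (starRingEnd ℂ) (f q.1) * C q.1 q.2 * g q.2) (ν.prod ν) ∧
    ∫ q : X × X, (starRingEnd ℂ) (f q.1) * C q.1 q.2 * g q.2 ∂(ν.prod ν) = 0 := by
  obtain ⟨a, r, hr, rfl⟩ := hI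
  obtain ⟨b, s, hs, rfl⟩ := hJ
  have hrd : r < dist a b := by
    by_contra! h
    exact Set.disjoint_left.1 hd (by simpa [Metric.mem_closedBall, dist_comm] using h)
      (Metric.mem_closedBall_self hs)
  have hsd : s < dist a b := by
    by_contra! h
    exact Set.disjoint_left.1 hd (Metric.mem_closedBall_self hr)
      (by simpa [Metric.mem_closedBall] using h)
  have hconst : ∀ x ∈ Metric.closedBall a r, ∀ x' ∈ Metric.closedBall b s,
      C x x' = C a b := by
    intro x hx x' hx'
    rw [Metric.mem_closedBall] at hx hx'
    have h1 : dist x x' ≤ dist a b := by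
      have e1 := dist_triangle_max x a x'
      have e2 := dist_triangle_max a b x'
      rw [dist_comm b x'] at e2
      exact e1.trans (max_le (hx.trans hrd.le) (e2.trans (max_le le_rfl (hx'.trans hsd.le))))
    have h2 : dist a b ≤ dist x x' := by
      have e1 := dist_triangle_max a x b
      have e2 := dist_triangle_max x x' b
      rw [dist_comm a x] at e1
      rcases le_max_iff.1 e1 with h | h
      · linarith
      · rcases le_max_iff.1 (h.trans e2) with h | h
        · exact h
        · linarith
    apply hC
    rw [le_antisymm h1 h2]
    apply IsUltrametricDist.closedBall_eq_of_mem
    rw [Metric.mem_closedBall, dist_comm]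
    exact hx.trans hrd.le
  have hfun : (fun q : X × X => (starRingEnd ℂ) (f q.1) * C q.1 q.2 * g q.2) =
      fun q : X × X => (starRingEnd ℂ) (f q.1) * (C a b * g q.2) := by
    funext q
    by_cases h1 : q.1 ∈ Metric.closedBall a r
    · by_cases h2 : q.2 ∈ Metric.closedBall b s
      · rw [hconst _ h1 _ h2, mul_assoc]
      · simp [hg0 _ h2]
    · simp [hf0 _ h1]
  have hcf : Integrable (fun x => (starRingEnd ℂ) (f x)) ν :=
    (LinearIsometryEquiv.integrable_comp_iff (Complex.conjLIE)).2 hf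
  rw [hfun]
  refine ⟨hcf.mul_prod (hg.const_mul (C a b)), ?_⟩
  rw [integral_prod_mul (fun x => (starRingEnd ℂ) (f x)) (fun x => C a b * g x),
    integral_conj, hfm]
  simp
end
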